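/- arXiv:2307.00349 — 7 statements merged into one kernel-verified Lean document; each statement's English description precedes it below -/
import Mathlib

section
/- Let (Ω, F, P) be a probability space with filtration (F_t)_{t≥0}, let β ∈ (0,1), and let F: ℝ²_{>0} → ℝ_{>0} be a neoclassical production function that is twice continuously differentiable with F_{HX} > 0. Suppose there exists σ > 1 with liminf_{H→∞} σ_F(H,1) > σ. Let (A_{Ht})_{t≥0} and (A_{Xt})_{t≥0} be adapted processes of positive random variables satisfying E[ Σ_{t=1}^∞ (A_{Ht}/A_{Xt})^{1/σ−1} | F_0 ] < ∞ almost surely. Define the wage w_t = F_H(A_{Ht},A_{Xt}) A_{Ht}, the land rent r_t = F_X(A_{Ht},A_{Xt}) A_{Xt}, the land price P_t = β w_t, the stochastic discount factor m_{t→t+1} = β w_t/(β w_{t+1} + r_{t+1}) with m_{t→t+s} = Π_{j=0}^{s−1} m_{t+j→t+j+1}, and the fundamental value V_t = E[ Σ_{s=1}^∞ m_{t→t+s} r_{t+s} | F_t ]. Then for every t, P_t > V_t almost surely; that is, land is overvalued in equilibrium. -/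
open MeasureTheory Filter Topology

noncomputable section

/-- Partial derivative of `F` with respect to its first argument (labor `H`). -/
def dH (F : ℝ → ℝ → ℝ) (H X : ℝ) : ℝ := deriv (fun h => F h X) H

/-- Partial derivative of `F` with respect to its second argument (land `X`). -/
def dX (F : ℝ → ℝ → ℝ) (H X : ℝ) : ℝ := deriv (fun x => F H x) X

/-- Second-order cross partial derivative of `F`. -/
def dHX (F : ℝ → ℝ → ℝ) (H X : ℝ) : ℝ := deriv (fun x => dH F H x) X

/-- Elasticity of substitution `σ_F = F_H F_X / (F F_{HX})`. -/
def sigmaF (F : ℝ → ℝ → ℝ) (H X : ℝ) : ℝ :=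
  dH F H X * dX F H X / (F H X * dHX F H X)

/-- A neoclassical production function: positive on the positive quadrant, homogeneous of
degree one, concave, continuously differentiable, with positive partial derivatives. -/
structure Neoclassical (F : ℝ → ℝ → ℝ) : Prop where
  pos : ∀ ⦃H X : ℝ⦄, 0 < H → 0 < X → 0 < F H X
  homog : ∀ ⦃l H X : ℝ⦄, 0 < l → 0 < H → 0 < X → F (l * H) (l * X) = l * F H X
  concave : ConcaveOn ℝ {p : ℝ × ℝ | 0 < p.1 ∧ 0 < p.2} (fun p => F p.1 p.2)
  contDiff : ContDiffOn ℝ 1 (fun p : ℝ × ℝ => F p.1 p.2) {p : ℝ × ℝ | 0 < p.1 ∧ 0 < p.2}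
  dH_pos : ∀ ⦃H X : ℝ⦄, 0 < H → 0 < X → 0 < dH F H X
  dX_pos : ∀ ⦃H X : ℝ⦄, 0 < H → 0 < X → 0 < dX F H X

/-- `g` is a version of the conditional expectation of the nonnegative extended-real-valued
function `f` given the sub-σ-algebra `m0`: it is `m0`-measurable and has the same integral
as `f` on every `m0`-measurable set. -/
def IsCondExp {Ω : Type*} (m0 : MeasurableSpace Ω) {m : MeasurableSpace Ω}
    (μ : Measure Ω) (f g : Ω → ENNReal) : Prop :=
  Measurable[m0] g ∧ ∀ s : Set Ω, MeasurableSet[m0] s →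
    ∫⁻ ω in s, f ω ∂μ = ∫⁻ ω in s, g ω ∂μ

/-! The rents collected up to date `t + n`, discounted to date `t`, are worth
`P_t - m_{t→t+n} P_{t+n}`, so land is overvalued as soon as the discounted price stays bounded away
from `0` along almost every path. It equals `P_t / ∏_{1 ≤ s ≤ n} (1 + r_{t+s} / P_{t+s})`, which is
bounded below when the yields `r / P`, or equivalently the ratios `r / w`, are summable. The ratio
`r / w` depends only on `A_H / A_X`, and its elasticity in that variable is `1 / σ_F - 1`. Hence
`r / w = O((A_H / A_X) ^ (1 / σ - 1))` at infinity, and this power is almost surely summable because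
the conditional expectation of its sum is finite. -/

section ConditionalExpectation

variable {Ω : Type*} {m0 m : MeasurableSpace Ω} {μ : Measure Ω} {f g : Ω → ENNReal}

namespace IsCondExp

theorem ae_lt_top (hm : m0 ≤ m) [SigmaFinite (μ.trim hm)] (h : IsCondExp m0 μ f g)
    (hf : AEMeasurable f μ) (hg : ∀ᵐ ω ∂μ, g ω < ⊤) : ∀ᵐ ω ∂μ, f ω < ⊤ := by
  obtain ⟨s, hs, hcover⟩ := @exists_spanning_measurableSet_le _ m0 _ h.1.ennreal_toNNReal
    (μ.trim hm) _
  rw [← Measure.restrict_univ (μ := μ), ← hcover, ae_restrict_iUnion_iff]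
  intro n
  obtain ⟨hsn, hμs, hbound⟩ := hs n
  rw [trim_measurableSet_eq hm hsn] at hμs
  have hg_coe : (fun ω => ((g ω).toNNReal : ENNReal)) =ᵐ[μ.restrict (s n)] g :=
    ae_restrict_of_ae (hg.mono fun ω hω => ENNReal.coe_toNNReal hω.ne)
  refine ae_lt_top' hf.restrict ?_
  rw [h.2 _ hsn, ← lintegral_congr_ae hg_coe]
  exact (setLIntegral_lt_top_of_le_nnreal hμs.ne
    ⟨n, fun ω hω => by exact_mod_cast hbound ω hω⟩).ne

theorem measure_eq_zero_of_le (hm : m0 ≤ m) (h : IsCondExp m0 μ f g) {p : Ω → ENNReal}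
    (hp : Measurable p) (hfp : ∀ᵐ ω ∂μ, f ω < p ω) {s : Set Ω} (hs : MeasurableSet[m0] s)
    (hpg : ∀ ω ∈ s, p ω ≤ g ω) (hfin : ∫⁻ ω in s, p ω ∂μ ≠ ⊤) : μ s = 0 := by
  by_contra hμs
  have hf_ne_top : ∫⁻ ω in s, f ω ∂μ ≠ ⊤ :=
    ne_top_of_le_ne_top hfin (lintegral_mono_ae (ae_restrict_of_ae (hfp.mono fun _ => le_of_lt)))
  have hlt : ∫⁻ ω in s, f ω ∂μ < ∫⁻ ω in s, f ω ∂μ := calc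
    ∫⁻ ω in s, f ω ∂μ < ∫⁻ ω in s, p ω ∂μ :=
      setLIntegral_strict_mono (hm s hs) hμs hp hf_ne_top (hfp.mono fun _ hω _ => hω)
    _ ≤ ∫⁻ ω in s, g ω ∂μ := setLIntegral_mono (h.1.mono hm le_rfl) hpg
    _ = ∫⁻ ω in s, f ω ∂μ := (h.2 s hs).symm
  exact hlt.false

theorem ae_lt_coe (hm : m0 ≤ m) [SigmaFinite (μ.trim hm)] (h : IsCondExp m0 μ f g)
    {p : Ω → NNReal} (hp : Measurable[m0] p) (hfp : ∀ᵐ ω ∂μ, f ω < p ω) :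
    ∀ᵐ ω ∂μ, g ω < p ω := by
  obtain ⟨s, hs, hcover⟩ := @exists_spanning_measurableSet_le _ m0 _ hp (μ.trim hm) _
  have hp' : Measurable[m0] fun ω => (p ω : ENNReal) := hp.coe_nnreal_ennreal
  rw [← Measure.restrict_univ (μ := μ), ← hcover, ae_restrict_iUnion_iff]
  intro n
  obtain ⟨hsn, hμs, hbound⟩ := hs n
  rw [trim_measurableSet_eq hm hsn] at hμs
  have hnull : μ ({ω | (p ω : ENNReal) ≤ g ω} ∩ s n) = 0 :=
    h.measure_eq_zero_of_le hm (hp'.mono hm le_rfl) hfp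
      ((measurableSet_le hp' h.1).inter hsn) (fun ω hω => hω.1)
      (setLIntegral_lt_top_of_le_nnreal (measure_inter_lt_top_of_right_ne_top hμs.ne).ne
        ⟨n, fun ω hω => by exact_mod_cast hbound ω hω.2⟩).ne
  rw [ae_iff, Measure.restrict_apply' (hm _ hsn)]
  simpa only [not_lt] using hnull

end IsCondExp

end ConditionalExpectation

section PowerDecay

theorem antitoneOn_mul_rpow_neg_of_deriv_le {f f' : ℝ → ℝ} {c K : ℝ} (hK : 0 < K)
    (hf : ∀ x ∈ Set.Ici K, HasDerivAt f (f' x) x)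
    (hf' : ∀ x ∈ Set.Ici K, f' x ≤ c * (f x / x)) :
    AntitoneOn (fun x => f x * x ^ (-c)) (Set.Ici K) := by
  have hderiv : ∀ x ∈ Set.Ici K,
      HasDerivAt (fun x => f x * x ^ (-c)) ((f' x - c * (f x / x)) * x ^ (-c)) x := by
    intro x hx
    have hx0 : 0 < x := hK.trans_le hx
    refine ((hf x hx).mul (Real.hasDerivAt_rpow_const (Or.inl hx0.ne'))).congr_deriv ?_
    rw [Real.rpow_sub_one hx0.ne']
    ring
  refine antitoneOn_of_hasDerivWithinAt_nonpos (convex_Ici K)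
    (fun x hx => (hderiv x hx).continuousAt.continuousWithinAt)
    (fun x hx => (hderiv x (interior_subset hx)).hasDerivWithinAt) fun x hx => ?_
  have hxK := interior_subset hx
  exact mul_nonpos_of_nonpos_of_nonneg (sub_nonpos.mpr (hf' x hxK))
    (Real.rpow_nonneg (hK.le.trans hxK) _)

theorem isBigO_rpow_of_deriv_le {f f' : ℝ → ℝ} {c : ℝ} (hf0 : ∀ᶠ x in atTop, 0 ≤ f x)
    (hf : ∀ᶠ x in atTop, HasDerivAt f (f' x) x)
    (hf' : ∀ᶠ x in atTop, f' x ≤ c * (f x / x)) :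
    f =O[atTop] fun x => x ^ c := by
  obtain ⟨K, hK⟩ := eventually_atTop.mp
    ((eventually_gt_atTop (0 : ℝ)).and (hf0.and (hf.and hf')))
  have hanti := antitoneOn_mul_rpow_neg_of_deriv_le (hK K le_rfl).1
    (fun x hx => (hK x hx).2.2.1) (fun x hx => (hK x hx).2.2.2)
  refine Asymptotics.IsBigO.of_bound (f K * K ^ (-c)) ?_
  filter_upwards [eventually_ge_atTop K] with x hx
  obtain ⟨hx0, hfx, -⟩ := hK x hx
  have hle : f x * x ^ (-c) ≤ f K * K ^ (-c) := hanti Set.self_mem_Ici hx hx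
  have hxc : 0 < x ^ c := Real.rpow_pos_of_pos hx0 c
  rw [Real.norm_of_nonneg hfx, Real.norm_of_nonneg hxc.le]
  rwa [Real.rpow_neg hx0.le, ← div_eq_mul_inv, div_le_iff₀ hxc] at hle

theorem tendsto_atTop_of_tendsto_rpow_nhds_zero {ι : Type*} {l : Filter ι} {u : ι → ℝ} {p : ℝ}
    (hu : ∀ i, 0 < u i) (hp : p < 0) (h : Tendsto (fun i => u i ^ p) l (𝓝 0)) :
    Tendsto u l atTop := by
  have hright : Tendsto (fun i => u i ^ p) l (𝓝[>] 0) :=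
    tendsto_nhdsWithin_iff.mpr ⟨h, .of_forall fun i => Real.rpow_pos_of_pos (hu i) p⟩
  refine ((tendsto_rpow_neg_nhdsGT_zero (inv_lt_zero.mpr hp)).comp hright).congr fun i => ?_
  exact Real.rpow_rpow_inv (hu i).le hp.ne

theorem summable_comp_of_isBigO_rpow {f : ℝ → ℝ} {u : ℕ → ℝ} {p : ℝ} (hp : p < 0)
    (hf : f =O[atTop] fun x => x ^ p) (hu : ∀ n, 0 < u n) (hsum : Summable fun n => u n ^ p) :
    Summable fun n => f (u n) :=
  summable_of_isBigO_nat hsum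
    (hf.comp_tendsto (tendsto_atTop_of_tendsto_rpow_nhds_zero hu hp hsum.tendsto_atTop_zero))

end PowerDecay

section Production

/-- Constant returns to scale: `F` is homogeneous of degree one on the positive quadrant. -/
def ConstantReturns (F : ℝ → ℝ → ℝ) : Prop :=
  ∀ ⦃l H X : ℝ⦄, 0 < l → 0 < H → 0 < X → F (l * H) (l * X) = l * F H X

/-- The ratio `r / w` of the land rent `r = F_X X` to the wage `w = F_H H`, i.e. the ratio of the
factor shares of land and labor. -/
def rentWageRatio (F : ℝ → ℝ → ℝ) (H X : ℝ) : ℝ := dX F H X * X / (dH F H X * H)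

variable {F : ℝ → ℝ → ℝ} {H X : ℝ}

theorem rentWageRatio_pos (hdH : 0 < dH F H X) (hdX : 0 < dX F H X) (hH : 0 < H) (hX : 0 < X) :
    0 < rentWageRatio F H X :=
  div_pos (mul_pos hdX hX) (mul_pos hdH hH)

theorem sigmaF_pos (hF : 0 < F H X) (hdH : 0 < dH F H X) (hdX : 0 < dX F H X)
    (hdHX : 0 < dHX F H X) : 0 < sigmaF F H X :=
  div_pos (mul_pos hdH hdX) (mul_pos hF hdHX)

theorem eventually_le_sigmaF_of_lt_liminf (hF : Neoclassical F)
    (hFHX : ∀ ⦃H X : ℝ⦄, 0 < H → 0 < X → 0 < dHX F H X) (hX : 0 < X) {σ : ℝ}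
    (hσ : σ < atTop.liminf fun H => sigmaF F H X) : ∀ᶠ H in atTop, σ ≤ sigmaF F H X := by
  have hnonneg : ∀ᶠ H in atTop, 0 ≤ sigmaF F H X := by
    filter_upwards [eventually_gt_atTop 0] with H hH
    exact (sigmaF_pos (hF.pos hH hX) (hF.dH_pos hH hX) (hF.dX_pos hH hX) (hFHX hH hX)).le
  exact (eventually_lt_of_lt_liminf hσ (isBoundedUnder_of_eventually_ge hnonneg)).mono
    fun _ => le_of_lt

theorem contDiffOn_section_left {n : WithTop ℕ∞}
    (hF : ContDiffOn ℝ n (fun p : ℝ × ℝ => F p.1 p.2) {p : ℝ × ℝ | 0 < p.1 ∧ 0 < p.2})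
    (hX : 0 < X) : ContDiffOn ℝ n (fun h => F h X) (Set.Ioi 0) :=
  hF.comp (g := fun p : ℝ × ℝ => F p.1 p.2) (contDiff_prodMk_left X).contDiffOn
    fun _ hh => ⟨hh, hX⟩

theorem hasDerivAt_dH (hF : DifferentiableAt ℝ (fun h => F h X) H) :
    HasDerivAt (fun h => F h X) (dH F H X) H :=
  hF.hasDerivAt

theorem differentiableAt_dH (hF : ContDiffOn ℝ 2 (fun h => F h X) (Set.Ioi 0)) (hH : 0 < H) :
    DifferentiableAt ℝ (fun h => dH F h X) H :=
  ((hF.deriv_of_isOpen (m := 1) isOpen_Ioi (by norm_num)).differentiableOn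
    one_ne_zero).differentiableAt (Ioi_mem_nhds hH)

theorem hasDerivAt_comp_div_mul {f : ℝ → ℝ} {f' : ℝ} (hf : HasDerivAt f f' H) (hX : X ≠ 0) :
    HasDerivAt (fun y => f (X / y * H)) (f' * -(H / X)) X := by
  have hinner : HasDerivAt (fun y => X / y * H) (-(H / X)) X := by
    refine (((hasDerivAt_inv hX).const_mul X).mul_const H).congr_deriv ?_
    field_simp
  refine HasDerivAt.comp (h₂ := f) X ?_ hinner
  rwa [div_self hX, one_mul]

namespace ConstantReturns

theorem dH_mul_mul (hF : ConstantReturns F) {l : ℝ} (hl : 0 < l) (hH : 0 < H) (hX : 0 < X) :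
    dH F (l * H) (l * X) = dH F H X := by
  have hscale : (fun h => F (l * h) (l * X)) =ᶠ[𝓝 H] fun h => l * F h X := by
    filter_upwards [Ioi_mem_nhds hH] with h hh using hF hl hh hX
  have hderiv : l * dH F (l * H) (l * X) = l * dH F H X := by
    simpa only [deriv_comp_mul_left l (fun h => F h (l * X)), smul_eq_mul,
      deriv_const_mul_field', dH] using hscale.deriv_eq
  exact mul_left_cancel₀ hl.ne' hderiv

theorem dX_mul_mul (hF : ConstantReturns F) {l : ℝ} (hl : 0 < l) (hH : 0 < H) (hX : 0 < X) :
    dX F (l * H) (l * X) = dX F H X := by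
  have hscale : (fun x => F (l * H) (l * x)) =ᶠ[𝓝 X] fun x => l * F H x := by
    filter_upwards [Ioi_mem_nhds hX] with x hx using hF hl hH hx
  have hderiv : l * dX F (l * H) (l * X) = l * dX F H X := by
    simpa only [deriv_comp_mul_left l (fun x => F (l * H) x), smul_eq_mul,
      deriv_const_mul_field', dX] using hscale.deriv_eq
  exact mul_left_cancel₀ hl.ne' hderiv

theorem dH_eq_dH_div (hF : ConstantReturns F) (hH : 0 < H) (hX : 0 < X) :
    dH F H X = dH F (H / X) 1 := by
  have h := hF.dH_mul_mul hX (div_pos hH hX) one_pos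
  rwa [mul_div_cancel₀ H hX.ne', mul_one] at h

theorem rentWageRatio_eq_rentWageRatio_div (hF : ConstantReturns F) (hH : 0 < H) (hX : 0 < X) :
    rentWageRatio F H X = rentWageRatio F (H / X) 1 := by
  have hdX := hF.dX_mul_mul hX (div_pos hH hX) one_pos
  rw [mul_div_cancel₀ H hX.ne', mul_one] at hdX
  rw [rentWageRatio, rentWageRatio, hF.dH_eq_dH_div hH hX, hdX]
  field_simp

theorem euler_identity (hF : ConstantReturns F) (hH : 0 < H) (hX : 0 < X)
    (hdiff : DifferentiableAt ℝ (fun h => F h X) H) :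
    F H X = dH F H X * H + dX F H X * X := by
  have hscale : (fun y => F H y) =ᶠ[𝓝 X] fun y => y / X * F (X / y * H) X := by
    filter_upwards [Ioi_mem_nhds hX] with y (hy : 0 < y)
    rw [← hF (div_pos hy hX) (mul_pos (div_pos hX hy) hH) hX]
    congr 1 <;> field_simp
  have hderiv : dX F H X = 1 / X * F H X + dH F H X * -(H / X) := by
    have h := ((hasDerivAt_id X).div_const X).mul
      (hasDerivAt_comp_div_mul (hasDerivAt_dH hdiff) hX.ne')
    simpa [dX, hX.ne'] using (h.congr_of_eventuallyEq hscale).deriv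
  rw [hderiv]
  field_simp
  ring

theorem dHX_eq (hF : ConstantReturns F) (hH : 0 < H) (hX : 0 < X)
    (hdiff : DifferentiableAt ℝ (fun h => dH F h X) H) :
    dHX F H X = -(H / X) * deriv (fun h => dH F h X) H := by
  have hscale : (fun y => dH F H y) =ᶠ[𝓝 X] fun y => dH F (X / y * H) X := by
    filter_upwards [Ioi_mem_nhds hX] with y (hy : 0 < y)
    rw [← hF.dH_mul_mul (div_pos hX hy) hH hy, div_mul_cancel₀ X hy.ne']
  rw [mul_comm]
  exact ((hasDerivAt_comp_div_mul hdiff.hasDerivAt hX.ne').congr_of_eventuallyEq hscale).deriv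

theorem hasDerivAt_rentWageRatio (hF : ConstantReturns F)
    (hF2 : ContDiffOn ℝ 2 (fun h => F h X) (Set.Ioi 0)) (hH : 0 < H) (hX : 0 < X)
    (hdH : ∀ ⦃h : ℝ⦄, 0 < h → dH F h X ≠ 0) (hdX : dX F H X ≠ 0) :
    HasDerivAt (fun h => rentWageRatio F h X)
      ((1 / sigmaF F H X - 1) * (rentWageRatio F H X / H)) H := by
  have hdiff : ∀ h, 0 < h → DifferentiableAt ℝ (fun h => F h X) h := fun h hh =>
    (hF2.differentiableOn two_ne_zero).differentiableAt (Ioi_mem_nhds hh)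
  have hratio : (fun h => rentWageRatio F h X) =ᶠ[𝓝 H] fun h => F h X / (dH F h X * h) - 1 := by
    filter_upwards [Ioi_mem_nhds hH] with h (hh : 0 < h)
    have hdHh := hdH hh
    rw [rentWageRatio, hF.euler_identity hh hX (hdiff h hh)]
    field_simp
    ring
  have hdHH := differentiableAt_dH hF2 hH
  have hdHne := hdH hH
  refine HasDerivAt.congr_of_eventuallyEq ?_ hratio
  refine (((hasDerivAt_dH (hdiff H hH)).div (hdHH.hasDerivAt.mul (hasDerivAt_id H))
    (mul_ne_zero hdHne hH.ne')).sub_const 1).congr_deriv ?_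
  rw [sigmaF, rentWageRatio, hF.dHX_eq hH hX hdHH, one_div_div,
    hF.euler_identity hH hX (hdiff H hH)]
  simp only [Pi.mul_apply, id]
  field_simp
  ring

theorem isBigO_rentWageRatio (hF : ConstantReturns F)
    (hF2 : ContDiffOn ℝ 2 (fun h => F h X) (Set.Ioi 0)) (hX : 0 < X)
    (hdH : ∀ ⦃h : ℝ⦄, 0 < h → 0 < dH F h X) (hdX : ∀ ⦃h : ℝ⦄, 0 < h → 0 < dX F h X)
    {σ : ℝ} (hσ : 0 < σ) (hσF : ∀ᶠ h in atTop, σ ≤ sigmaF F h X) :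
    (fun h => rentWageRatio F h X) =O[atTop] fun h => h ^ (1 / σ - 1) := by
  have hpos : ∀ ⦃h : ℝ⦄, 0 < h → 0 < rentWageRatio F h X := fun h hh =>
    rentWageRatio_pos (hdH hh) (hdX hh) hh hX
  refine isBigO_rpow_of_deriv_le
    (f' := fun h => (1 / sigmaF F h X - 1) * (rentWageRatio F h X / h)) ?_ ?_ ?_
  · filter_upwards [eventually_gt_atTop 0] with h hh using (hpos hh).le
  · filter_upwards [eventually_gt_atTop 0] with h hh
    exact hF.hasDerivAt_rentWageRatio hF2 hh hX (fun h hh => (hdH hh).ne') (hdX hh).ne'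
  · filter_upwards [eventually_gt_atTop 0, hσF] with h hh hσh
    have := (hpos hh).le
    gcongr

theorem summable_rentWageRatio (hF : ConstantReturns F)
    (hF2 : ContDiffOn ℝ 2 (fun h => F h 1) (Set.Ioi 0))
    (hdH : ∀ ⦃h : ℝ⦄, 0 < h → 0 < dH F h 1) (hdX : ∀ ⦃h : ℝ⦄, 0 < h → 0 < dX F h 1)
    {σ : ℝ} (hσ : 1 < σ) (hσF : ∀ᶠ h in atTop, σ ≤ sigmaF F h 1) {a x : ℕ → ℝ}
    (ha : ∀ n, 0 < a n) (hx : ∀ n, 0 < x n)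
    (hsum : Summable fun n => (a n / x n) ^ (1 / σ - 1)) :
    Summable fun n => rentWageRatio F (a n) (x n) := by
  have hσ0 : 0 < σ := one_pos.trans hσ
  have hexp : 1 / σ - 1 < 0 := sub_neg.mpr ((div_lt_one hσ0).mpr hσ)
  refine (summable_comp_of_isBigO_rpow hexp (hF.isBigO_rentWageRatio hF2 one_pos hdH hdX hσ0 hσF)
    (fun n => div_pos (ha n) (hx n)) hsum).congr fun n => ?_
  exact (hF.rentWageRatio_eq_rentWageRatio_div (ha n) (hx n)).symm

theorem measurable_dH {α : Type*} {_ : MeasurableSpace α} (hF : ConstantReturns F) {a x : α → ℝ}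
    (ha : Measurable a) (hx : Measurable x) (ha_pos : ∀ i, 0 < a i) (hx_pos : ∀ i, 0 < x i) :
    Measurable fun i => dH F (a i) (x i) := by
  simp only [fun i => hF.dH_eq_dH_div (ha_pos i) (hx_pos i)]
  exact (measurable_deriv fun h => F h 1).comp (ha.div hx)

end ConstantReturns

end Production

section AssetPricing

/-- The discount factor from date `0` to date `s` of an asset with price `P` and dividend `r`
whose one-period gross return is `(P (j + 1) + r (j + 1)) / P j`. -/
def discountFactor (P r : ℕ → ℝ) (s : ℕ) : ℝ :=
  ∏ j ∈ Finset.range s, P j / (P (j + 1) + r (j + 1))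

variable {P r : ℕ → ℝ}

theorem discountFactor_zero : discountFactor P r 0 = 1 :=
  Finset.prod_range_zero _

theorem discountFactor_nonneg (hP : ∀ n, 0 < P n) (hr : ∀ n, 0 ≤ r n) (n : ℕ) :
    0 ≤ discountFactor P r n :=
  Finset.prod_nonneg fun j _ => div_nonneg (hP j).le (add_nonneg (hP (j + 1)).le (hr (j + 1)))

theorem discountFactor_succ_mul (hP : ∀ n, 0 < P n) (hr : ∀ n, 0 ≤ r n) (n : ℕ) :
    discountFactor P r (n + 1) * (P (n + 1) + r (n + 1)) = discountFactor P r n * P n := by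
  rw [discountFactor, Finset.prod_range_succ, mul_assoc,
    div_mul_cancel₀ _ (add_pos_of_pos_of_nonneg (hP _) (hr _)).ne', discountFactor]

theorem sum_discounted_dividends (hP : ∀ n, 0 < P n) (hr : ∀ n, 0 ≤ r n) (n : ℕ) :
    ∑ s ∈ Finset.range n, discountFactor P r (s + 1) * r (s + 1) =
      P 0 - discountFactor P r n * P n := by
  induction n with
  | zero => simp [discountFactor_zero]
  | succ n ih =>
    rw [Finset.sum_range_succ, ih, ← discountFactor_succ_mul hP hr]
    ring

theorem discounted_price_mul_prod (hP : ∀ n, 0 < P n) (hr : ∀ n, 0 ≤ r n) (n : ℕ) :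
    discountFactor P r n * P n * ∏ s ∈ Finset.range n, (1 + r (s + 1) / P (s + 1)) = P 0 := by
  induction n with
  | zero => simp [discountFactor_zero]
  | succ n ih =>
    have hPn := (hP (n + 1)).ne'
    rw [← ih, ← discountFactor_succ_mul hP hr n, Finset.prod_range_succ]
    field_simp

theorem mul_exp_neg_tsum_le_discounted_price (hP : ∀ n, 0 < P n) (hr : ∀ n, 0 ≤ r n)
    (hsum : Summable fun n => r (n + 1) / P (n + 1)) (n : ℕ) :
    P 0 * Real.exp (-∑' s, r (s + 1) / P (s + 1)) ≤ discountFactor P r n * P n := by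
  have hyield : ∀ s, 0 ≤ r (s + 1) / P (s + 1) := fun s => div_nonneg (hr _) (hP _).le
  have hprod : ∏ s ∈ Finset.range n, (1 + r (s + 1) / P (s + 1)) ≤
      Real.exp (∑' s, r (s + 1) / P (s + 1)) :=
    (Real.prod_one_add_le_exp_sum _ hyield).trans
      (Real.exp_le_exp.mpr (hsum.sum_le_tsum _ fun s _ => hyield s))
  rw [Real.exp_neg, ← div_eq_mul_inv, div_le_iff₀ (Real.exp_pos _),
    ← discounted_price_mul_prod hP hr n]
  exact mul_le_mul_of_nonneg_left hprod
    (mul_nonneg (discountFactor_nonneg hP hr n) (hP n).le)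

theorem tsum_discounted_dividends_lt_price (hP : ∀ n, 0 < P n) (hr : ∀ n, 0 ≤ r n)
    (hsum : Summable fun n => r (n + 1) / P (n + 1)) :
    ∑' s, ENNReal.ofReal (discountFactor P r (s + 1) * r (s + 1)) < ENNReal.ofReal (P 0) := by
  set bubble := P 0 * Real.exp (-∑' s, r (s + 1) / P (s + 1))
  have hbubble_pos : 0 < bubble := mul_pos (hP 0) (Real.exp_pos _)
  refine lt_of_le_of_lt (b := ENNReal.ofReal (P 0 - bubble)) ?_
    ((ENNReal.ofReal_lt_ofReal_iff (hP 0)).mpr (sub_lt_self _ hbubble_pos))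
  refine ENNReal.tsum_le_of_sum_range_le fun n => ?_
  rw [← ENNReal.ofReal_sum_of_nonneg fun s _ =>
    mul_nonneg (discountFactor_nonneg hP hr _) (hr _), sum_discounted_dividends hP hr]
  exact ENNReal.ofReal_le_ofReal
    (sub_le_sub_left (mul_exp_neg_tsum_le_discounted_price hP hr hsum n) _)

end AssetPricing

theorem land_overvaluation_general
    {Ω : Type*} {mΩ : MeasurableSpace Ω} (μ : Measure Ω) (ℱ : Filtration ℕ mΩ)
    [SigmaFiniteFiltration μ ℱ] (β : ℝ) (hβ : 0 < β)
    (F : ℝ → ℝ → ℝ) (hF : ConstantReturns F)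
    (hF2 : ContDiffOn ℝ 2 (fun h => F h 1) (Set.Ioi 0))
    (hdH : ∀ ⦃H X : ℝ⦄, 0 < H → 0 < X → 0 < dH F H X)
    (hdX : ∀ ⦃H X : ℝ⦄, 0 < H → 0 < X → 0 < dX F H X)
    (σ : ℝ) (hσ : 1 < σ) (hσF : ∀ᶠ H in atTop, σ ≤ sigmaF F H 1)
    (AH AX : ℕ → Ω → ℝ) (hAH : Adapted ℱ AH) (hAX : Adapted ℱ AX)
    (hAH_pos : ∀ t ω, 0 < AH t ω) (hAX_pos : ∀ t ω, 0 < AX t ω)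
    (hsum : ∃ g : Ω → ENNReal,
      IsCondExp (ℱ 0) μ
        (fun ω => ∑' t : ℕ, ENNReal.ofReal ((AH (t + 1) ω / AX (t + 1) ω) ^ (1 / σ - 1))) g ∧
      ∀ᵐ ω ∂μ, g ω < ⊤)
    (w r P : ℕ → Ω → ℝ) (m : ℕ → ℕ → Ω → ℝ)
    (hw : ∀ t ω, w t ω = dH F (AH t ω) (AX t ω) * AH t ω)
    (hr : ∀ t ω, r t ω = dX F (AH t ω) (AX t ω) * AX t ω)
    (hP : ∀ t ω, P t ω = β * w t ω)
    (hm : ∀ t s ω, m t s ω =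
      ∏ j ∈ Finset.range s, β * w (t + j) ω / (β * w (t + j + 1) ω + r (t + j + 1) ω))
    (t : ℕ) (V : Ω → ENNReal)
    (hV : IsCondExp (ℱ t) μ
      (fun ω => ∑' s : ℕ, ENNReal.ofReal (m t (s + 1) ω * r (t + s + 1) ω)) V) :
    ∀ᵐ ω ∂μ, V ω < ENNReal.ofReal (P t ω) := by
  have hPpos : ∀ t ω, 0 < P t ω := fun t ω => by
    rw [hP, hw]
    exact mul_pos hβ (mul_pos (hdH (hAH_pos t ω) (hAX_pos t ω)) (hAH_pos t ω))
  have hrpos : ∀ t ω, 0 < r t ω := fun t ω => by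
    rw [hr]
    exact mul_pos (hdX (hAH_pos t ω) (hAX_pos t ω)) (hAX_pos t ω)
  have hmP : ∀ s ω, m t s ω = discountFactor (fun n => P (t + n) ω) (fun n => r (t + n) ω) s :=
    fun s ω => by simp only [hm, discountFactor, hP, add_assoc]
  have hP_meas : Measurable[ℱ t] (P t) := by
    rw [funext (hP t), funext (hw t)]
    exact ((hF.measurable_dH (hAH t) (hAX t) (hAH_pos t) (hAX_pos t)).mul (hAH t)).const_mul β
  obtain ⟨g, hg, hg_fin⟩ := hsum
  have hsum_fin := hg.ae_lt_top (ℱ.le 0) (Measurable.tsum fun n =>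
    (((hAH.measurable (i := n + 1)).div (hAX.measurable (i := n + 1))).pow_const
      (1 / σ - 1)).ennreal_ofReal).aemeasurable hg_fin
  refine hV.ae_lt_coe (ℱ.le t) hP_meas.real_toNNReal ?_
  filter_upwards [hsum_fin] with ω hω
  have hpow : Summable fun n => (AH (n + 1) ω / AX (n + 1) ω) ^ (1 / σ - 1) :=
    (ENNReal.summable_toReal hω.ne).congr fun n =>
      ENNReal.toReal_ofReal (Real.rpow_nonneg (div_pos (hAH_pos _ ω) (hAX_pos _ ω)).le _)
  have hratio := hF.summable_rentWageRatio hF2 (fun _ hh => hdH hh one_pos)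
    (fun _ hh => hdX hh one_pos) hσ hσF (fun n => hAH_pos (n + 1) ω) (fun n => hAX_pos (n + 1) ω)
    hpow
  have hyield : Summable fun n => r (t + (n + 1)) ω / P (t + (n + 1)) ω := by
    refine (((summable_nat_add_iff t).mpr hratio).mul_left β⁻¹).congr fun n => ?_
    rw [show n + t + 1 = t + (n + 1) by ring, rentWageRatio, ← hw, ← hr, hP]
    field_simp
  simp only [hmP]
  exact tsum_discounted_dividends_lt_price (fun n => hPpos (t + n) ω)
    (fun n => (hrpos (t + n) ω).le) hyield

/-- **Land Overvaluation Theorem.** In the stochastic OLG economy with log utility,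
a neoclassical production function whose elasticity of substitution exceeds `σ > 1` at
high input levels, and productivities satisfying the summability condition
`E[∑_{t≥1} (A_{Ht}/A_{Xt})^{1/σ-1} | F_0] < ∞` a.s., the equilibrium land price
`P_t = β w_t` strictly exceeds the fundamental value
`V_t = E[∑_{s≥1} m_{t→t+s} r_{t+s} | F_t]` almost surely, for every `t`. -/
theorem land_overvaluation
    {Ω : Type*} {mΩ : MeasurableSpace Ω} (μ : Measure Ω) [IsProbabilityMeasure μ]
    (ℱ : Filtration ℕ mΩ)
    (β : ℝ) (hβ : β ∈ Set.Ioo (0 : ℝ) 1)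
    (F : ℝ → ℝ → ℝ) (hF : Neoclassical F)
    (hF2 : ContDiffOn ℝ 2 (fun p : ℝ × ℝ => F p.1 p.2) {p : ℝ × ℝ | 0 < p.1 ∧ 0 < p.2})
    (hFHX : ∀ ⦃H X : ℝ⦄, 0 < H → 0 < X → 0 < dHX F H X)
    (σ : ℝ) (hσ : 1 < σ)
    (hliminf : σ < atTop.liminf (fun H : ℝ => sigmaF F H 1))
    (AH AX : ℕ → Ω → ℝ)
    (hAH_adapted : Adapted ℱ AH) (hAX_adapted : Adapted ℱ AX)
    (hAH_pos : ∀ t ω, 0 < AH t ω) (hAX_pos : ∀ t ω, 0 < AX t ω)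
    (hsum : ∃ g : Ω → ENNReal,
      IsCondExp (ℱ 0) μ
        (fun ω => ∑' t : ℕ, ENNReal.ofReal ((AH (t + 1) ω / AX (t + 1) ω) ^ (1 / σ - 1))) g ∧
      ∀ᵐ ω ∂μ, g ω < ⊤)
    (w r P : ℕ → Ω → ℝ) (m : ℕ → ℕ → Ω → ℝ)
    (hw : ∀ t ω, w t ω = dH F (AH t ω) (AX t ω) * AH t ω)
    (hr : ∀ t ω, r t ω = dX F (AH t ω) (AX t ω) * AX t ω)
    (hP : ∀ t ω, P t ω = β * w t ω)
    (hm : ∀ t s ω, m t s ω =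
      ∏ j ∈ Finset.range s, β * w (t + j) ω / (β * w (t + j + 1) ω + r (t + j + 1) ω)) :
    ∀ t : ℕ, ∀ V : Ω → ENNReal,
      IsCondExp (ℱ t) μ
        (fun ω => ∑' s : ℕ, ENNReal.ofReal (m t (s + 1) ω * r (t + s + 1) ω)) V →
      ∀ᵐ ω ∂μ, V ω < ENNReal.ofReal (P t ω) :=
  land_overvaluation_general μ ℱ β hβ.1 F hF.homog (contDiffOn_section_left hF2 one_pos)
    hF.dH_pos hF.dX_pos σ hσ (eventually_le_sigmaF_of_lt_liminf hF hFHX one_pos hliminf)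
    AH AX hAH_adapted hAX_adapted hAH_pos hAX_pos hsum w r P m hw hr hP hm
end
end

section
/- Let F: ℝ²_{>0} → ℝ_{>0} be a twice continuously differentiable neoclassical production function with F_{HX} > 0, let A > 0 and σ > 0 be such that σ_F(H,1) ≥ σ for all H ≥ A, and set ρ = 1/σ. Then for all A_H, A_X > 0 with A_H/A_X ≥ A, we have F_X(A_H,A_X)/F_H(A_H,A_X) ≤ ( F_X(A,1)/F_H(A,1) ) · A^{−ρ} · (A_H/A_X)^ρ. -/
noncomputable section

/-!
Homogeneity of degree one makes the marginal rate of substitution `F_X / F_H` a function of `H / X`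
alone. Euler's identity, applied to `F` (degree one) and to `F_H` (degree zero), shows that its
elasticity in `H` is the reciprocal of the elasticity of substitution, hence at most `ρ = 1 / σ`
where `σ_F ≥ σ`. A function of elasticity at most `ρ` grows at most like `H ^ ρ`.
-/

open Set Filter Topology

theorem antitoneOn_mul_rpow_neg_of_mul_deriv_le {f f' : ℝ → ℝ} {D : Set ℝ} {ρ : ℝ} (hD : Convex ℝ D)
    (hD_pos : D ⊆ Ioi 0) (hf : ContinuousOn f D)
    (hf' : ∀ x ∈ interior D, HasDerivAt f (f' x) x)
    (hρ : ∀ x ∈ interior D, x * f' x ≤ ρ * f x) :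
    AntitoneOn (fun x => f x * x ^ (-ρ)) D := by
  have hpow : ContinuousOn (fun x : ℝ => x ^ (-ρ)) D :=
    continuousOn_id.rpow_const fun x hx => .inl (hD_pos hx).ne'
  refine antitoneOn_of_hasDerivWithinAt_nonpos hD (hf.mul hpow)
    (f' := fun x => x ^ (-ρ - 1) * (x * f' x - ρ * f x)) (fun x hx => ?_) fun x hx => ?_
  all_goals have hx_pos : 0 < x := hD_pos (interior_subset hx)
  · have hderiv := (hf' x hx).mul (Real.hasDerivAt_rpow_const (p := -ρ) (.inl hx_pos.ne'))
    refine (hderiv.congr_deriv ?_).hasDerivWithinAt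
    rw [Real.rpow_sub_one hx_pos.ne']
    field_simp
    ring
  · exact mul_nonpos_of_nonneg_of_nonpos (Real.rpow_nonneg hx_pos.le _) (sub_nonpos.2 (hρ x hx))

/-- `F` is positively homogeneous of degree `k` on the positive quadrant. The degree is an arbitrary
real number, so that the partial derivatives are again homogeneous, of degree `k - 1`. -/
def HomogeneousOfDegree (k : ℝ) (F : ℝ → ℝ → ℝ) : Prop :=
  ∀ ⦃l H X : ℝ⦄, 0 < l → 0 < H → 0 < X → F (l * H) (l * X) = l ^ k * F H X

/-- The marginal rate of substitution `F_X / F_H` of `X` for `H`, whose growth in `H` is governed by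
the elasticity of substitution. -/
def marginalRate (F : ℝ → ℝ → ℝ) (H X : ℝ) : ℝ := dX F H X / dH F H X

namespace HomogeneousOfDegree

variable {F : ℝ → ℝ → ℝ} {k H X : ℝ}

protected theorem dH (hF : HomogeneousOfDegree k F) : HomogeneousOfDegree (k - 1) (dH F) := by
  intro l H X hl hH hX
  have hscale : (fun h => F (l * h) (l * X)) =ᶠ[𝓝 H] fun h => l ^ k * F h X := by
    filter_upwards [Ioi_mem_nhds hH] with h hh using hF hl hh hX
  have hderiv : l * dH F (l * H) (l * X) = l ^ k * dH F H X := by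
    simpa only [dH, deriv_comp_mul_left l fun h => F h (l * X), deriv_const_mul_field,
      smul_eq_mul] using hscale.deriv_eq
  rw [Real.rpow_sub_one hl.ne', div_mul_eq_mul_div, eq_div_iff hl.ne', mul_comm, hderiv]

protected theorem dX (hF : HomogeneousOfDegree k F) : HomogeneousOfDegree (k - 1) (dX F) := by
  intro l H X hl hH hX
  have hscale : (fun x => F (l * H) (l * x)) =ᶠ[𝓝 X] fun x => l ^ k * F H x := by
    filter_upwards [Ioi_mem_nhds hX] with x hx using hF hl hH hx
  have hderiv : l * dX F (l * H) (l * X) = l ^ k * dX F H X := by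
    simpa only [dX, deriv_comp_mul_left l fun x => F (l * H) x, deriv_const_mul_field,
      smul_eq_mul] using hscale.deriv_eq
  rw [Real.rpow_sub_one hl.ne', div_mul_eq_mul_div, eq_div_iff hl.ne', mul_comm, hderiv]

theorem marginalRate_eq_div_one (hF : HomogeneousOfDegree k F) (hH : 0 < H) (hX : 0 < X) :
    marginalRate F H X = marginalRate F (H / X) 1 := by
  have hH_eq : X * (H / X) = H := mul_div_cancel₀ H hX.ne'
  have hdH := hF.dH hX (div_pos hH hX) one_pos
  have hdX := hF.dX hX (div_pos hH hX) one_pos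
  rw [hH_eq, mul_one] at hdH hdX
  rw [marginalRate, hdH, hdX, mul_div_mul_left _ _ (Real.rpow_pos_of_pos hX _).ne', marginalRate]

theorem euler_identity (hF : HomogeneousOfDegree k F) (hH : 0 < H) (hX : 0 < X)
    (hd : DifferentiableAt ℝ (fun h => F h X) H) :
    H * dH F H X + X * dX F H X = k * F H X := by
  -- Scaling only `X` and moving the scale onto `H` avoids joint differentiability.
  have hscale : (fun t => F H (X * t)) =ᶠ[𝓝 1] fun t => t ^ k * F (H / t) X := by
    filter_upwards [Ioi_mem_nhds one_pos] with t ht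
    rw [← hF ht (div_pos hH ht) hX, mul_div_cancel₀ H (ne_of_gt ht), mul_comm t]
  have hleft : deriv (fun t => F H (X * t)) 1 = X * dX F H X := by
    rw [deriv_comp_mul_left X (F H), mul_one, smul_eq_mul, dX]
  have hdiv : HasDerivAt (fun t : ℝ => H / t) (-H) 1 := by
    simpa [div_eq_mul_inv] using (hasDerivAt_inv (one_ne_zero (α := ℝ))).const_mul H
  have hcomp : HasDerivAt (fun t => F (H / t) X) (dH F H X * -H) 1 :=
    HasDerivAt.comp_of_eq 1 hd.hasDerivAt hdiv (div_one H).symm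
  have hright : HasDerivAt (fun t => t ^ k * F (H / t) X) (k * F H X - H * dH F H X) 1 := by
    refine ((Real.hasDerivAt_rpow_const (p := k) (.inl one_ne_zero)).mul hcomp).congr_deriv ?_
    simp only [Real.one_rpow, mul_one, one_mul, div_one]
    ring
  have hderiv := hscale.deriv_eq
  rw [hleft, hright.deriv] at hderiv
  rw [hderiv, add_sub_cancel]

theorem marginalRate_eq_div_dH_sub (hF : HomogeneousOfDegree 1 F) (hH : 0 < H) (hX : 0 < X)
    (hd : DifferentiableAt ℝ (fun h => F h X) H) (hFH : dH F H X ≠ 0) :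
    marginalRate F H X = (F H X / dH F H X - H) / X := by
  have heuler := hF.euler_identity hH hX hd
  rw [marginalRate]
  field_simp
  linarith

theorem mul_dHX_eq (hF : HomogeneousOfDegree 1 F) (hH : 0 < H) (hX : 0 < X)
    (hd : DifferentiableAt ℝ (fun h => dH F h X) H) :
    X * dHX F H X = -(H * dH (dH F) H X) := by
  have heuler : H * dH (dH F) H X + X * dHX F H X = (1 - 1) * dH F H X :=
    hF.dH.euler_identity hH hX hd
  linarith

theorem hasDerivAt_marginalRate (hF : HomogeneousOfDegree 1 F) (hH : 0 < H) (hX : 0 < X)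
    (hF2 : ContDiffAt ℝ 2 (fun h => F h X) H) (hFH : dH F H X ≠ 0) :
    HasDerivAt (fun h => marginalRate F h X)
      (F H X * dHX F H X / (H * dH F H X ^ 2)) H := by
  have hd : DifferentiableAt ℝ (fun h => F h X) H := hF2.differentiableAt two_ne_zero
  have hdH : DifferentiableAt ℝ (fun h => dH F h X) H :=
    (hF2.derivWithin one_add_one_eq_two.le).differentiableAt one_ne_zero
  have heq : (fun h => marginalRate F h X) =ᶠ[𝓝 H] fun h => (F h X / dH F h X - h) / X := by
    filter_upwards [Ioi_mem_nhds hH, hdH.continuousAt.eventually_ne hFH,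
      hF2.eventually (by simp)] with h hh hFh hF2h
    exact hF.marginalRate_eq_div_dH_sub hh hX (hF2h.differentiableAt two_ne_zero) hFh
  have hderiv := ((hd.hasDerivAt.div hdH.hasDerivAt hFH).sub (hasDerivAt_id H)).div_const X
  refine (hderiv.congr_of_eventuallyEq heq).congr_deriv ?_
  change ((dH F H X * dH F H X - F H X * dH (dH F) H X) /
    dH F H X ^ 2 - 1) / X = _
  have hdHX := hF.mul_dHX_eq hH hX hdH
  field_simp
  linear_combination (-F H X) * hdHX

theorem hasDerivAt_marginalRate_div_sigmaF (hF : HomogeneousOfDegree 1 F) (hH : 0 < H) (hX : 0 < X)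
    (hF2 : ContDiffAt ℝ 2 (fun h => F h X) H) (hFH : dH F H X ≠ 0)
    (hFX : dX F H X ≠ 0) :
    HasDerivAt (fun h => marginalRate F h X) (marginalRate F H X / (H * sigmaF F H X)) H := by
  refine (hF.hasDerivAt_marginalRate hH hX hF2 hFH).congr_deriv ?_
  -- Where `F * F_HX = 0`, division by zero gives `sigmaF F H X = 0` and both sides vanish.
  rw [marginalRate, sigmaF]
  field_simp

theorem antitoneOn_marginalRate_mul_rpow_neg (hF : HomogeneousOfDegree 1 F) {D : Set ℝ} {σ : ℝ}
    (hD : Convex ℝ D) (hD_pos : D ⊆ Ioi 0) (hX : 0 < X)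
    (hF2 : ∀ H ∈ D, ContDiffAt ℝ 2 (fun h => F h X) H) (hFH : ∀ H ∈ D, 0 < dH F H X)
    (hFX : ∀ H ∈ D, 0 < dX F H X) (hσ : 0 < σ) (hES : ∀ H ∈ D, σ ≤ sigmaF F H X) :
    AntitoneOn (fun H => marginalRate F H X * H ^ (-(1 / σ))) D := by
  have hderiv : ∀ H ∈ D,
      HasDerivAt (fun h => marginalRate F h X) (marginalRate F H X / (H * sigmaF F H X)) H :=
    fun H hH => hF.hasDerivAt_marginalRate_div_sigmaF (hD_pos hH) hX (hF2 H hH) (hFH H hH).ne'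
      (hFX H hH).ne'
  refine antitoneOn_mul_rpow_neg_of_mul_deriv_le hD hD_pos
    (fun H hH => (hderiv H hH).continuousAt.continuousWithinAt)
    (fun H hH => hderiv H (interior_subset hH)) fun H hH => ?_
  replace hH := interior_subset hH
  have hrate : 0 ≤ marginalRate F H X := (div_pos (hFX H hH) (hFH H hH)).le
  calc H * (marginalRate F H X / (H * sigmaF F H X))
      = marginalRate F H X / sigmaF F H X := by
        rw [← mul_div_assoc, mul_div_mul_left _ _ (hD_pos hH).ne']
    _ ≤ marginalRate F H X / σ := div_le_div_of_nonneg_left hrate hσ (hES H hH)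
    _ = 1 / σ * marginalRate F H X := by ring

end HomogeneousOfDegree

theorem Neoclassical.homogeneousOfDegree_one {F : ℝ → ℝ → ℝ} (hF : Neoclassical F) :
    HomogeneousOfDegree 1 F := fun l H X hl hH hX => by
  rw [Real.rpow_one, hF.homog hl hH hX]

theorem contDiffAt_left_of_contDiffOn_quadrant {F : ℝ → ℝ → ℝ} {n : WithTop ℕ∞} {H X : ℝ}
    (hF : ContDiffOn ℝ n (fun p : ℝ × ℝ => F p.1 p.2) {p : ℝ × ℝ | 0 < p.1 ∧ 0 < p.2})
    (hH : 0 < H) (hX : 0 < X) : ContDiffAt ℝ n (fun h => F h X) H :=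
  (hF.contDiffAt (prod_mem_nhds (Ioi_mem_nhds hH) (Ioi_mem_nhds hX))).comp H
    (contDiffAt_id.prodMk contDiffAt_const)

theorem marginal_rate_bound_general {F : ℝ → ℝ → ℝ} (hF : HomogeneousOfDegree 1 F) {A σ : ℝ}
    (hA : 0 < A) (hσ : 0 < σ) (hF2 : ∀ H, A ≤ H → ContDiffAt ℝ 2 (fun h => F h 1) H)
    (hFH : ∀ H, A ≤ H → 0 < dH F H 1) (hFX : ∀ H, A ≤ H → 0 < dX F H 1)
    (hES : ∀ H, A ≤ H → σ ≤ sigmaF F H 1) {AH AX : ℝ} (hAH : 0 < AH) (hAX : 0 < AX)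
    (hle : A ≤ AH / AX) :
    dX F AH AX / dH F AH AX ≤
      dX F A 1 / dH F A 1 * A ^ (-(1 / σ)) * (AH / AX) ^ (1 / σ) := by
  have hratio : 0 < AH / AX := div_pos hAH hAX
  have hanti := hF.antitoneOn_marginalRate_mul_rpow_neg (convex_Ici A) (Ici_subset_Ioi.2 hA) one_pos
    hF2 hFH hFX hσ hES
  have hbound : marginalRate F (AH / AX) 1 * (AH / AX) ^ (-(1 / σ)) ≤
      marginalRate F A 1 * A ^ (-(1 / σ)) := hanti self_mem_Ici hle hle
  rw [Real.rpow_neg hratio.le, ← div_eq_mul_inv, div_le_iff₀ (Real.rpow_pos_of_pos hratio _),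
    ← hF.marginalRate_eq_div_one hAH hAX] at hbound
  exact hbound

/-- If the elasticity of substitution satisfies `σ_F(H,1) ≥ σ` for all `H ≥ A`, then for all
`A_H, A_X > 0` with `A_H/A_X ≥ A` (setting `ρ = 1/σ`),
`F_X(A_H,A_X)/F_H(A_H,A_X) ≤ (F_X(A,1)/F_H(A,1)) A^{-ρ} (A_H/A_X)^ρ`. -/
theorem marginal_rate_bound
    (F : ℝ → ℝ → ℝ) (hF : Neoclassical F)
    (hF2 : ContDiffOn ℝ 2 (fun p : ℝ × ℝ => F p.1 p.2) {p : ℝ × ℝ | 0 < p.1 ∧ 0 < p.2})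
    (hFHX : ∀ ⦃H X : ℝ⦄, 0 < H → 0 < X → 0 < dHX F H X)
    (A σ : ℝ) (hA : 0 < A) (hσ : 0 < σ)
    (hES : ∀ H : ℝ, A ≤ H → σ ≤ sigmaF F H 1) :
    ∀ AH AX : ℝ, 0 < AH → 0 < AX → A ≤ AH / AX →
      dX F AH AX / dH F AH AX ≤
        dX F A 1 / dH F A 1 * A ^ (-(1 / σ)) * (AH / AX) ^ (1 / σ) := by
  intro AH AX hAH hAX hle
  exact marginal_rate_bound_general hF.homogeneousOfDegree_one hA hσ
    (fun _ hH => contDiffAt_left_of_contDiffOn_quadrant hF2 (hA.trans_le hH) one_pos)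
    (fun _ hH => hF.dH_pos (hA.trans_le hH) one_pos)
    (fun _ hH => hF.dX_pos (hA.trans_le hH) one_pos) hES hAH hAX hle
end
end

section
/- Let α ∈ (0,1), ρ > 1, and G_H > G_X > 0. For each integer t ≥ 0 define w_t = α (α G_H^{(1−ρ)t} + (1−α) G_X^{(1−ρ)t})^{ρ/(1−ρ)} G_H^{(1−ρ)t} and r_t = (1−α)(α G_H^{(1−ρ)t} + (1−α) G_X^{(1−ρ)t})^{ρ/(1−ρ)} G_X^{(1−ρ)t}. Then w_t / ( α (1−α)^{ρ/(1−ρ)} G_H^{(1−ρ)t} G_X^{ρt} ) → 1 and r_t / ( (1−α)^{1/(1−ρ)} G_X^t ) → 1 as t → ∞. -/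
open Filter Topology

open Asymptotics

/-!
Since `GH ^ (1 - ρ) < GX ^ (1 - ρ)`, the `GH` term of the CES aggregate is negligible against the
`GX` term, so the aggregate is asymptotically equivalent to the latter. Equivalence is preserved by
real powers and products, and both factor incomes are a power of the aggregate times an explicit
factor.
-/

section

variable {ι : Type*} {l : Filter ι}

lemma isLittleO_const_rpow_of_lt {a b : ℝ} (ha : 0 ≤ a) (hab : a < b) {τ : ι → ℝ}
    (hτ : Tendsto τ l atTop) : (fun i => a ^ τ i) =o[l] fun i => b ^ τ i := by
  have hb : 0 < b := ha.trans_lt hab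
  have hdiv : Tendsto (fun i => (a / b) ^ τ i) l (𝓝 0) :=
    (tendsto_rpow_atTop_of_base_lt_one _ (by linarith [div_nonneg ha hb.le])
      ((div_lt_one hb).2 hab)).comp hτ
  refine isLittleO_of_tendsto (fun i hi => absurd hi (Real.rpow_pos_of_pos hb _).ne') ?_
  simpa only [Real.div_rpow ha hb.le] using hdiv

lemma rpow_mul_rpow_div {x c : ℝ} (hx : 0 ≤ x) (hc : c ≠ 0) (p t : ℝ) :
    (x ^ (c * t)) ^ (p / c) = x ^ (p * t) := by
  rw [← Real.rpow_mul hx]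
  congr 1
  field_simp

lemma isEquivalent_ces_rpow {a b c G K : ℝ} (hb : 0 < b) (hc : c ≠ 0) (hG : 0 ≤ G)
    (hK : 0 ≤ K) (hGK : G ^ c < K ^ c) (p : ℝ) {τ : ι → ℝ} (hτ : Tendsto τ l atTop) :
    (fun i => (a * G ^ (c * τ i) + b * K ^ (c * τ i)) ^ (p / c))
      ~[l] fun i => b ^ (p / c) * K ^ (p * τ i) := by
  have hsmall : (fun i => G ^ (c * τ i)) =o[l] fun i => K ^ (c * τ i) := by
    simpa only [Real.rpow_mul hG, Real.rpow_mul hK] using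
      isLittleO_const_rpow_of_lt (Real.rpow_nonneg hG c) hGK hτ
  have hbase : (fun i => a * G ^ (c * τ i) + b * K ^ (c * τ i))
      ~[l] fun i => b * K ^ (c * τ i) :=
    ((hsmall.const_mul_left a).const_mul_right hb.ne').add_isEquivalent .refl
  have hpow := hbase.rpow (r := p / c) fun i => by positivity
  refine hpow.congr_right (.of_forall fun i => ?_)
  simp only [Pi.pow_apply, Real.mul_rpow hb.le (Real.rpow_nonneg hK _),
    rpow_mul_rpow_div hK hc]

theorem ces_wage_rent_asymptotics_general {α ρ GH GX : ℝ} (hα₀ : α ≠ 0) (hα₁ : α < 1)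
    (hGH : 0 < GH) (hGX : 0 < GX) (hG : GH ^ (1 - ρ) < GX ^ (1 - ρ))
    {τ : ι → ℝ} (hτ : Tendsto τ l atTop) {w r : ι → ℝ}
    (hw : ∀ i, w i =
      α * (α * GH ^ ((1 - ρ) * τ i) + (1 - α) * GX ^ ((1 - ρ) * τ i))
        ^ (ρ / (1 - ρ)) * GH ^ ((1 - ρ) * τ i))
    (hr : ∀ i, r i =
      (1 - α) * (α * GH ^ ((1 - ρ) * τ i) + (1 - α) * GX ^ ((1 - ρ) * τ i))
        ^ (ρ / (1 - ρ)) * GX ^ ((1 - ρ) * τ i)) :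
    Tendsto (fun i =>
        w i / (α * (1 - α) ^ (ρ / (1 - ρ)) * GH ^ ((1 - ρ) * τ i) * GX ^ (ρ * τ i)))
      l (𝓝 1) ∧
    Tendsto (fun i => r i / ((1 - α) ^ (1 / (1 - ρ)) * GX ^ τ i)) l (𝓝 1) := by
  have hα : 0 < 1 - α := sub_pos.2 hα₁
  have hρ : 1 - ρ ≠ 0 := fun h => by simp only [h, Real.rpow_zero, lt_irrefl] at hG
  have hces := isEquivalent_ces_rpow (a := α) hα hρ hGH.le hGX.le hG ρ hτ
  have hwage : w ~[l] fun i =>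
      α * (1 - α) ^ (ρ / (1 - ρ)) * GH ^ ((1 - ρ) * τ i) * GX ^ (ρ * τ i) := by
    convert hces.mul (.refl (u := fun i => α * GH ^ ((1 - ρ) * τ i))) using 1 <;> ext i
    · rw [hw, Pi.mul_apply]; ring
    · rw [Pi.mul_apply]; ring
  have hshare : (1 - α) ^ (1 / (1 - ρ)) = (1 - α) ^ (ρ / (1 - ρ)) * (1 - α) := by
    rw [← Real.rpow_add_one hα.ne']
    congr 1
    field_simp
    ring
  have hgrowth (t : ℝ) : GX ^ t = GX ^ (ρ * t) * GX ^ ((1 - ρ) * t) := by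
    rw [← Real.rpow_add hGX]
    congr 1
    ring
  have hrent : r ~[l] fun i => (1 - α) ^ (1 / (1 - ρ)) * GX ^ τ i := by
    convert hces.mul (.refl (u := fun i => (1 - α) * GX ^ ((1 - ρ) * τ i))) using 1 <;> ext i
    · rw [hr, Pi.mul_apply]; ring
    · rw [hshare, hgrowth, Pi.mul_apply]; ring
  exact ⟨(isEquivalent_iff_tendsto_one (.of_forall fun i => by positivity)).1 hwage,
    (isEquivalent_iff_tendsto_one (.of_forall fun i => by positivity)).1 hrent⟩

end

/-- Asymptotics of the CES equilibrium wage and land rent under unbalanced exponential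
growth with elasticity of substitution `1/ρ < 1`:
`w_t ~ α (1-α)^{ρ/(1-ρ)} G_H^{(1-ρ)t} G_X^{ρt}` and `r_t ~ (1-α)^{1/(1-ρ)} G_X^t`. -/
theorem ces_wage_rent_asymptotics
    (α ρ GH GX : ℝ) (hα : α ∈ Set.Ioo (0 : ℝ) 1) (hρ : 1 < ρ)
    (hGX : 0 < GX) (hGHGX : GX < GH)
    (w r : ℕ → ℝ)
    (hw : ∀ t : ℕ, w t =
      α * (α * GH ^ ((1 - ρ) * (t : ℝ)) + (1 - α) * GX ^ ((1 - ρ) * (t : ℝ)))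
        ^ (ρ / (1 - ρ)) * GH ^ ((1 - ρ) * (t : ℝ)))
    (hr : ∀ t : ℕ, r t =
      (1 - α) * (α * GH ^ ((1 - ρ) * (t : ℝ)) + (1 - α) * GX ^ ((1 - ρ) * (t : ℝ)))
        ^ (ρ / (1 - ρ)) * GX ^ ((1 - ρ) * (t : ℝ))) :
    Tendsto (fun t : ℕ =>
        w t / (α * (1 - α) ^ (ρ / (1 - ρ)) * GH ^ ((1 - ρ) * (t : ℝ)) * GX ^ (ρ * (t : ℝ))))
      atTop (𝓝 1) ∧
    Tendsto (fun t : ℕ => r t / ((1 - α) ^ (1 / (1 - ρ)) * GX ^ (t : ℝ))) atTop (𝓝 1) :=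
  ces_wage_rent_asymptotics_general hα.1.ne' hα.2 (hGX.trans hGHGX) hGX
    (Real.rpow_lt_rpow_of_neg hGX hGHGX (sub_neg.2 hρ)) tendsto_natCast_atTop_atTop hw hr
end

section
/- Let α ∈ (0,1), β ∈ (0,1), ρ > 1, and G_H > G_X > 0. For each integer t ≥ 0 define w_t = α (α G_H^{(1−ρ)t} + (1−α) G_X^{(1−ρ)t})^{ρ/(1−ρ)} G_H^{(1−ρ)t} and r_t = (1−α)(α G_H^{(1−ρ)t} + (1−α) G_X^{(1−ρ)t})^{ρ/(1−ρ)} G_X^{(1−ρ)t}, and the gross risk-free rate R_t = (β w_t + r_t)/(β w_{t−1}) for t ≥ 1. Then R_t → ∞ as t → ∞. -/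
open Filter Topology

/-!
The CES aggregator is increasing and homogeneous of degree one, so output grows at least by the
factor `g` each period if both productivities do. The land yield relative to last period's price is
`r_{t+1} / (β w_t) = (1 - α) / (α β) * (F_{t+1} / F_t) ^ ρ * (A_{H,t} / A_{X,t+1}) ^ (ρ - 1)`;
the ratio of outputs is at least `g`, and the last factor diverges when `ρ > 1` and `A_X` lags
behind `A_H`.
-/

section CES

/-- The CES production function with share parameter `α` and elasticity of substitution `1 / ρ`.
The Cobb-Douglas limit `ρ = 1` is not encoded: there the exponent `1 / 0 = 0` gives the
constant `1`. -/
noncomputable def ces (α ρ H X : ℝ) : ℝ :=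
  (α * H ^ (1 - ρ) + (1 - α) * X ^ (1 - ρ)) ^ (1 / (1 - ρ))

/-- The income `F_H(H, X) * H` of the factor `H` under CES production, in closed form: the
marginal product is `F_H = α * F ^ ρ * H ^ (-ρ)`. -/
noncomputable def cesWage (α ρ H X : ℝ) : ℝ :=
  α * ces α ρ H X ^ ρ * H ^ (1 - ρ)

/-- The income `F_X(H, X) * X` of the factor `X` under CES production, in closed form: the
marginal product is `F_X = (1 - α) * F ^ ρ * X ^ (-ρ)`. -/
noncomputable def cesLandRent (α ρ H X : ℝ) : ℝ :=
  (1 - α) * ces α ρ H X ^ ρ * X ^ (1 - ρ)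

variable {α β ρ g H H' X X' : ℝ}

lemma ces_base_pos (hα : α ∈ Set.Icc (0 : ℝ) 1) (hH : 0 < H) (hX : 0 < X) :
    0 < α * H ^ (1 - ρ) + (1 - α) * X ^ (1 - ρ) :=
  convex_Ioi (0 : ℝ) (Real.rpow_pos_of_pos hH _) (Real.rpow_pos_of_pos hX _) hα.1
    (sub_nonneg.2 hα.2) (add_sub_cancel α 1)

lemma ces_pos (hα : α ∈ Set.Icc (0 : ℝ) 1) (hH : 0 < H) (hX : 0 < X) : 0 < ces α ρ H X :=
  Real.rpow_pos_of_pos (ces_base_pos hα hH hX) _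

lemma ces_rpow_self (hα : α ∈ Set.Icc (0 : ℝ) 1) (hH : 0 < H) (hX : 0 < X) :
    ces α ρ H X ^ ρ = (α * H ^ (1 - ρ) + (1 - α) * X ^ (1 - ρ)) ^ (ρ / (1 - ρ)) := by
  rw [ces, ← Real.rpow_mul (ces_base_pos hα hH hX).le, one_div_mul_eq_div]

lemma ces_mul_mul (hα : α ∈ Set.Icc (0 : ℝ) 1) (hρ : ρ ≠ 1) (hg : 0 ≤ g) (hH : 0 < H)
    (hX : 0 < X) : ces α ρ (g * H) (g * X) = g * ces α ρ H X := by
  have hbase : α * (g * H) ^ (1 - ρ) + (1 - α) * (g * X) ^ (1 - ρ) =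
      g ^ (1 - ρ) * (α * H ^ (1 - ρ) + (1 - α) * X ^ (1 - ρ)) := by
    rw [Real.mul_rpow hg hH.le, Real.mul_rpow hg hX.le]
    ring
  rw [ces, ces, hbase, Real.mul_rpow (Real.rpow_nonneg hg _) (ces_base_pos hα hH hX).le, one_div,
    Real.rpow_rpow_inv hg (sub_ne_zero.2 hρ.symm)]

lemma ces_le_ces (hα : α ∈ Set.Icc (0 : ℝ) 1) (hH : 0 < H) (hX : 0 < X) (hHH' : H ≤ H')
    (hXX' : X ≤ X') : ces α ρ H X ≤ ces α ρ H' X' := by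
  have hα' : 0 ≤ 1 - α := sub_nonneg.2 hα.2
  rcases le_total 0 (1 - ρ) with hρ | hρ
  · refine Real.rpow_le_rpow (ces_base_pos hα hH hX).le ?_ (one_div_nonneg.2 hρ)
    gcongr
    exact hα.1
  · refine Real.rpow_le_rpow_of_nonpos
      (ces_base_pos hα (hH.trans_le hHH') (hX.trans_le hXX')) ?_ (one_div_nonpos.2 hρ)
    exact add_le_add
      (mul_le_mul_of_nonneg_left (Real.rpow_le_rpow_of_nonpos hH hHH' hρ) hα.1)
      (mul_le_mul_of_nonneg_left (Real.rpow_le_rpow_of_nonpos hX hXX' hρ) hα')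

lemma le_ces_div_ces (hα : α ∈ Set.Icc (0 : ℝ) 1) (hρ : ρ ≠ 1) (hg : 0 < g) (hH : 0 < H)
    (hX : 0 < X) (hHH' : g * H ≤ H') (hXX' : g * X ≤ X') :
    g ≤ ces α ρ H' X' / ces α ρ H X := by
  rw [le_div_iff₀ (ces_pos hα hH hX), ← ces_mul_mul hα hρ hg.le hH hX]
  exact ces_le_ces hα (mul_pos hg hH) (mul_pos hg hX) hHH' hXX'

lemma cesWage_pos (hα : α ∈ Set.Ioc (0 : ℝ) 1) (hH : 0 < H) (hX : 0 < X) :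
    0 < cesWage α ρ H X :=
  mul_pos (mul_pos hα.1 (Real.rpow_pos_of_pos (ces_pos (Set.Ioc_subset_Icc_self hα) hH hX) _))
    (Real.rpow_pos_of_pos hH _)

lemma cesLandRent_div_cesWage (hα : α ∈ Set.Icc (0 : ℝ) 1) (hH : 0 < H) (hX : 0 < X)
    (hH' : 0 < H') (hX' : 0 < X') :
    cesLandRent α ρ H' X' / (β * cesWage α ρ H X) =
      (1 - α) / (α * β) * (ces α ρ H' X' / ces α ρ H X) ^ ρ * (H / X') ^ (ρ - 1) := by
  rw [cesLandRent, cesWage, Real.div_rpow (ces_pos hα hH' hX').le (ces_pos hα hH hX).le,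
    Real.div_rpow hH.le hX'.le, ← neg_sub ρ 1, Real.rpow_neg hH.le, Real.rpow_neg hX'.le]
  simp only [div_eq_mul_inv, mul_inv, inv_inv]
  ring

lemma le_ces_gross_return (hα : α ∈ Set.Ioc (0 : ℝ) 1) (hβ : 0 < β) (hρ : 1 < ρ) (hg : 0 < g)
    (hH : 0 < H) (hX : 0 < X) (hHH' : g * H ≤ H') (hXX' : g * X ≤ X') :
    (1 - α) / (α * β) * g ^ ρ * (H / X') ^ (ρ - 1) ≤
      (β * cesWage α ρ H' X' + cesLandRent α ρ H' X') / (β * cesWage α ρ H X) := by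
  have hα' : α ∈ Set.Icc (0 : ℝ) 1 := Set.Ioc_subset_Icc_self hα
  have hH' : 0 < H' := (mul_pos hg hH).trans_le hHH'
  have hX' : 0 < X' := (mul_pos hg hX).trans_le hXX'
  have hw : 0 < cesWage α ρ H X := cesWage_pos hα hH hX
  have hw' : 0 < cesWage α ρ H' X' := cesWage_pos hα hH' hX'
  have hc : 0 ≤ (1 - α) / (α * β) :=
    div_nonneg (sub_nonneg.2 hα.2) (mul_pos hα.1 hβ).le
  calc (1 - α) / (α * β) * g ^ ρ * (H / X') ^ (ρ - 1)
      ≤ (1 - α) / (α * β) * (ces α ρ H' X' / ces α ρ H X) ^ ρ * (H / X') ^ (ρ - 1) := by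
        gcongr
        exact le_ces_div_ces hα' hρ.ne' hg hH hX hHH' hXX'
    _ = cesLandRent α ρ H' X' / (β * cesWage α ρ H X) :=
        (cesLandRent_div_cesWage hα' hH hX hH' hX').symm
    _ ≤ (β * cesWage α ρ H' X' + cesLandRent α ρ H' X') / (β * cesWage α ρ H X) := by
        gcongr
        exact le_add_of_nonneg_left (mul_pos hβ hw').le

lemma cesWage_pow_pow (hα : α ∈ Set.Icc (0 : ℝ) 1) (hH : 0 < H) (hX : 0 < X) (t : ℕ) :
    cesWage α ρ (H ^ t) (X ^ t) =
      α * (α * H ^ ((1 - ρ) * (t : ℝ)) + (1 - α) * X ^ ((1 - ρ) * (t : ℝ))) ^ (ρ / (1 - ρ)) *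
        H ^ ((1 - ρ) * (t : ℝ)) := by
  rw [cesWage, ces_rpow_self hα (pow_pos hH t) (pow_pos hX t), mul_comm (1 - ρ),
    Real.rpow_natCast_mul hH.le, Real.rpow_natCast_mul hX.le]

lemma cesLandRent_pow_pow (hα : α ∈ Set.Icc (0 : ℝ) 1) (hH : 0 < H) (hX : 0 < X) (t : ℕ) :
    cesLandRent α ρ (H ^ t) (X ^ t) =
      (1 - α) * (α * H ^ ((1 - ρ) * (t : ℝ)) + (1 - α) * X ^ ((1 - ρ) * (t : ℝ))) ^
        (ρ / (1 - ρ)) * X ^ ((1 - ρ) * (t : ℝ)) := by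
  rw [cesLandRent, ces_rpow_self hα (pow_pos hH t) (pow_pos hX t), mul_comm (1 - ρ),
    Real.rpow_natCast_mul hH.le, Real.rpow_natCast_mul hX.le]

end CES

lemma tendsto_pow_div_pow_succ_atTop {a b : ℝ} (hb : 0 < b) (hab : b < a) :
    Tendsto (fun t : ℕ => a ^ t / b ^ (t + 1)) atTop atTop := by
  have hratio : Tendsto (fun t : ℕ => (a / b) ^ t / b) atTop atTop :=
    (tendsto_pow_atTop_atTop_of_one_lt ((one_lt_div hb).2 hab)).atTop_div_const hb
  simpa only [div_pow, div_div, ← pow_succ] using hratio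

theorem ces_interest_rate_diverges_general {α β ρ g : ℝ} {H X w r R : ℕ → ℝ}
    (hα : α ∈ Set.Ioo (0 : ℝ) 1) (hβ : 0 < β) (hρ : 1 < ρ) (hg : 0 < g)
    (hH : ∀ t, 0 < H t) (hX : ∀ t, 0 < X t)
    (hH_growth : ∀ t, g * H t ≤ H (t + 1)) (hX_growth : ∀ t, g * X t ≤ X (t + 1))
    (hHX : Tendsto (fun t => H t / X (t + 1)) atTop atTop)
    (hw : ∀ t, w t = cesWage α ρ (H t) (X t)) (hr : ∀ t, r t = cesLandRent α ρ (H t) (X t))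
    (hR : ∀ t, 1 ≤ t → R t = (β * w t + r t) / (β * w (t - 1))) :
    Tendsto R atTop atTop := by
  have hc : 0 < (1 - α) / (α * β) * g ^ ρ :=
    mul_pos (div_pos (sub_pos.2 hα.2) (mul_pos hα.1 hβ)) (Real.rpow_pos_of_pos hg ρ)
  have hbound (t : ℕ) :
      (1 - α) / (α * β) * g ^ ρ * (H t / X (t + 1)) ^ (ρ - 1) ≤ R (t + 1) := by
    rw [hR (t + 1) (Nat.le_add_left 1 t), Nat.add_sub_cancel, hw, hw, hr]
    exact le_ces_gross_return (Set.Ioo_subset_Ioc_self hα) hβ hρ hg (hH t) (hX t)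
      (hH_growth t) (hX_growth t)
  rw [← tendsto_add_atTop_iff_nat 1]
  exact tendsto_atTop_mono hbound
    (((tendsto_rpow_atTop (sub_pos.2 hρ)).comp hHX).const_mul_atTop hc)

/-- With CES production with elasticity of substitution `1/ρ < 1` and unbalanced exponential
growth `G_H > G_X`, the gross risk-free rate `R_t = (β w_t + r_t)/(β w_{t-1})` diverges to
infinity. -/
theorem ces_interest_rate_diverges
    (α β ρ GH GX : ℝ) (hα : α ∈ Set.Ioo (0 : ℝ) 1) (hβ : β ∈ Set.Ioo (0 : ℝ) 1)
    (hρ : 1 < ρ) (hGX : 0 < GX) (hGHGX : GX < GH)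
    (w r : ℕ → ℝ) (R : ℕ → ℝ)
    (hw : ∀ t : ℕ, w t =
      α * (α * GH ^ ((1 - ρ) * (t : ℝ)) + (1 - α) * GX ^ ((1 - ρ) * (t : ℝ)))
        ^ (ρ / (1 - ρ)) * GH ^ ((1 - ρ) * (t : ℝ)))
    (hr : ∀ t : ℕ, r t =
      (1 - α) * (α * GH ^ ((1 - ρ) * (t : ℝ)) + (1 - α) * GX ^ ((1 - ρ) * (t : ℝ)))
        ^ (ρ / (1 - ρ)) * GX ^ ((1 - ρ) * (t : ℝ)))
    (hR : ∀ t : ℕ, 1 ≤ t → R t = (β * w t + r t) / (β * w (t - 1))) :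
    Tendsto R atTop atTop := by
  have hGH : 0 < GH := hGX.trans hGHGX
  have hα' : α ∈ Set.Icc (0 : ℝ) 1 := Set.Ioo_subset_Icc_self hα
  have hGH_growth (t : ℕ) : GX * GH ^ t ≤ GH ^ (t + 1) := by
    rw [pow_succ']
    gcongr
  exact ces_interest_rate_diverges_general hα hβ.1 hρ hGX (pow_pos hGH) (pow_pos hGX)
    hGH_growth (fun t => (pow_succ' GX t).ge) (tendsto_pow_div_pow_succ_atTop hGX hGHGX)
    (fun t => (hw t).trans (cesWage_pow_pow hα' hGH hGX t).symm)
    (fun t => (hr t).trans (cesLandRent_pow_pow hα' hGH hGX t).symm) hR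
end

section
/- Let α ∈ (0,1) and A_1, A_2 > 0. For H, X > 0, define the aggregate production function F(H,X) as the maximum of A_1 H_1^α X_1^{1−α} + A_2 H_2 over all H_1, H_2, X_1, X_2 ≥ 0 with H_1 + H_2 = H and X_1 + X_2 = X (interpreting A_1 H_1^α X_1^{1−α} as 0 when H_1 = 0 or X_1 = 0). Then F(H,X) = A_1 H^α X^{1−α} if α A_1/A_2 ≥ (H/X)^{1−α}, and F(H,X) = A_2 H + (1−α) α^{α/(1−α)} (A_1/A_2^α)^{1/(1−α)} X if α A_1/A_2 < (H/X)^{1−α}. -/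
/-!
A concave production function lies below its tangent planes, and by constant returns to scale the
tangent plane of `A h^α x^(1-α)` along the ray `h = k x` is linear: its coefficients are the
marginal products `α A k^(α-1)` of labor and `(1-α) A k^α` of land. These serve as shadow prices,
and an allocation using all land in sector 1 is optimal as soon as the wage it induces there is at
least `A₂`, with equality unless sector 2 employs nobody. The first regime is the corner `k = H/X`;
in the second, `k = (α A₁/A₂)^(1/(1-α))` is the labor-land ratio at which the wage equals `A₂`.
-/

/-- The Cobb-Douglas production function with productivity `A` and labor share `α`, of labor `h`
and land `x`. -/
noncomputable def cobbDouglas (A α h x : ℝ) : ℝ :=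
  A * h ^ α * x ^ (1 - α)

/-- The aggregate outputs attainable from labor `H` and land `X` when one sector produces `f h x`
from labor `h` and land `x`, and the other has constant labor productivity `B`. Land may be left to
the second sector, where it is idle. -/
def aggregateOutputs (f : ℝ → ℝ → ℝ) (B H X : ℝ) : Set ℝ :=
  {y | ∃ H1 H2 X1 X2 : ℝ, 0 ≤ H1 ∧ 0 ≤ H2 ∧ 0 ≤ X1 ∧ 0 ≤ X2 ∧
    H1 + H2 = H ∧ X1 + X2 = X ∧ y = f H1 X1 + B * H2}

/-- The marginal product of labor in `cobbDouglas A α` at labor-land ratio `k`. -/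
noncomputable def laborMarginalProduct (A α k : ℝ) : ℝ :=
  α * A * k ^ (α - 1)

/-- The marginal product of land in `cobbDouglas A α` at labor-land ratio `k`. -/
noncomputable def landMarginalProduct (A α k : ℝ) : ℝ :=
  (1 - α) * A * k ^ α

/-- The labor-land ratio at which the marginal product of labor in `cobbDouglas A α` equals `B`, for
`α ≠ 1`. -/
noncomputable def cutoffRatio (A α B : ℝ) : ℝ :=
  (α * A / B) ^ (1 - α)⁻¹

section SupportingPrices

variable {f : ℝ → ℝ → ℝ} {B H X w r H1 : ℝ}

theorem mem_upperBounds_aggregateOutputs_of_supporting_prices (hr : 0 ≤ r) (hBw : B ≤ w)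
    (hf : ∀ h x, 0 ≤ h → 0 ≤ x → f h x ≤ w * h + r * x) :
    w * H + r * X ∈ upperBounds (aggregateOutputs f B H X) := by
  rintro _ ⟨h₁, h₂, x₁, x₂, hh₁, hh₂, hx₁, hx₂, rfl, rfl, rfl⟩
  calc f h₁ x₁ + B * h₂ ≤ (w * h₁ + r * x₁) + w * h₂ := by gcongr; exact hf h₁ x₁ hh₁ hx₁
    _ ≤ w * (h₁ + h₂) + r * (x₁ + x₂) := by linarith [mul_nonneg hr hx₂]

theorem isGreatest_aggregateOutputs_of_supporting_prices (hH1 : 0 ≤ H1) (hH1H : H1 ≤ H)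
    (hX : 0 ≤ X) (hr : 0 ≤ r) (hBw : B ≤ w)
    (hf : ∀ h x, 0 ≤ h → 0 ≤ x → f h x ≤ w * h + r * x) (hf_eq : f H1 X = w * H1 + r * X)
    (hslack : (w - B) * (H - H1) = 0) :
    IsGreatest (aggregateOutputs f B H X) (f H1 X + B * (H - H1)) := by
  refine ⟨⟨H1, H - H1, X, 0, hH1, sub_nonneg.2 hH1H, hX, le_rfl, by ring, by ring, rfl⟩, ?_⟩
  have hvalue : f H1 X + B * (H - H1) = w * H + r * X := by
    linear_combination hf_eq - hslack
  exact hvalue ▸ mem_upperBounds_aggregateOutputs_of_supporting_prices hr hBw hf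

end SupportingPrices

section CobbDouglas

variable {A α B H X k h x : ℝ}

theorem cobbDouglas_mul_self (hk : 0 ≤ k) (hx : 0 ≤ x) :
    cobbDouglas A α (k * x) x = A * k ^ α * x := by
  have hpow : x ^ α * x ^ (1 - α) = x := by
    rw [← Real.rpow_add' hx (by simp)]
    simp
  rw [cobbDouglas, Real.mul_rpow hk hx]
  linear_combination A * k ^ α * hpow

theorem cobbDouglas_le_marginalProducts (hA : 0 ≤ A) (hα₀ : 0 ≤ α) (hα₁ : α ≤ 1) (hk : 0 < k)
    (hh : 0 ≤ h) (hx : 0 ≤ x) :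
    cobbDouglas A α h x ≤ laborMarginalProduct A α k * h + landMarginalProduct A α k * x := by
  have hcancel : (k ^ (α - 1)) ^ α * (k ^ α) ^ (1 - α) = 1 := by
    rw [← Real.rpow_mul hk.le, ← Real.rpow_mul hk.le, ← Real.rpow_add hk,
      show (α - 1) * α + α * (1 - α) = 0 by ring, Real.rpow_zero]
  have hamgm : h ^ α * x ^ (1 - α) ≤ α * (k ^ (α - 1) * h) + (1 - α) * (k ^ α * x) :=
    calc h ^ α * x ^ (1 - α) = (k ^ (α - 1) * h) ^ α * (k ^ α * x) ^ (1 - α) := by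
          rw [Real.mul_rpow (by positivity) hh, Real.mul_rpow (by positivity) hx]
          linear_combination -(h ^ α * x ^ (1 - α)) * hcancel
      _ ≤ α * (k ^ (α - 1) * h) + (1 - α) * (k ^ α * x) :=
          Real.geom_mean_le_arith_mean2_weighted hα₀ (sub_nonneg.2 hα₁) (by positivity)
            (by positivity) (by ring)
  calc cobbDouglas A α h x = A * (h ^ α * x ^ (1 - α)) := mul_assoc _ _ _
    _ ≤ A * (α * (k ^ (α - 1) * h) + (1 - α) * (k ^ α * x)) := by gcongr
    _ = laborMarginalProduct A α k * h + landMarginalProduct A α k * x := by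
      rw [laborMarginalProduct, landMarginalProduct]
      ring

theorem cobbDouglas_mul_self_eq_marginalProducts (hk : 0 < k) (hx : 0 ≤ x) :
    cobbDouglas A α (k * x) x =
      laborMarginalProduct A α k * (k * x) + landMarginalProduct A α k * x := by
  have hpow : k ^ (α - 1) * k = k ^ α := by
    rw [Real.rpow_sub_one hk.ne', div_mul_cancel₀ _ hk.ne']
  rw [cobbDouglas_mul_self hk.le hx, laborMarginalProduct, landMarginalProduct]
  linear_combination -(α * A * x) * hpow

theorem isGreatest_aggregateOutputs_cobbDouglas (hA : 0 ≤ A) (hα₀ : 0 ≤ α) (hα₁ : α ≤ 1)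
    (hk : 0 < k) (hX : 0 ≤ X) (hkX : k * X ≤ H) (hB : B ≤ laborMarginalProduct A α k)
    (hslack : (laborMarginalProduct A α k - B) * (H - k * X) = 0) :
    IsGreatest (aggregateOutputs (cobbDouglas A α) B H X)
      (cobbDouglas A α (k * X) X + B * (H - k * X)) := by
  have hr : 0 ≤ landMarginalProduct A α k :=
    mul_nonneg (mul_nonneg (sub_nonneg.2 hα₁) hA) (by positivity)
  exact isGreatest_aggregateOutputs_of_supporting_prices (by positivity) hkX hX hr hB
    (fun _ _ hh hx => cobbDouglas_le_marginalProducts hA hα₀ hα₁ hk hh hx)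
    (cobbDouglas_mul_self_eq_marginalProducts hk hX) hslack

theorem le_laborMarginalProduct_iff (hB : 0 < B) (hk : 0 < k) :
    B ≤ laborMarginalProduct A α k ↔ k ^ (1 - α) ≤ α * A / B := by
  rw [laborMarginalProduct, ← neg_sub 1 α, Real.rpow_neg hk.le, ← div_eq_mul_inv,
    le_div_iff₀ (by positivity), le_div_iff₀ hB, mul_comm]

theorem cutoffRatio_pos (hA : 0 < A) (hα : 0 < α) (hB : 0 < B) : 0 < cutoffRatio A α B :=
  Real.rpow_pos_of_pos (by positivity) _

theorem laborMarginalProduct_cutoffRatio (hA : 0 < A) (hα₀ : 0 < α) (hα₁ : α ≠ 1) (hB : 0 < B) :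
    laborMarginalProduct A α (cutoffRatio A α B) = B := by
  have hpow : cutoffRatio A α B ^ (1 - α) = α * A / B :=
    Real.rpow_inv_rpow (by positivity) (sub_ne_zero.2 hα₁.symm)
  rw [laborMarginalProduct, ← neg_sub 1 α, Real.rpow_neg (cutoffRatio_pos hA hα₀ hB).le, hpow]
  field_simp

theorem cutoffRatio_lt_iff (hA : 0 ≤ A) (hα₀ : 0 ≤ α) (hα₁ : α < 1) (hB : 0 ≤ B)
    (hk : 0 ≤ k) : cutoffRatio A α B < k ↔ α * A / B < k ^ (1 - α) :=
  Real.rpow_inv_lt_iff_of_pos (by positivity) hk (sub_pos.2 hα₁)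

theorem mul_cutoffRatio_rpow (hA : 0 < A) (hα₀ : 0 ≤ α) (hα₁ : α ≠ 1) (hB : 0 ≤ B) :
    A * cutoffRatio A α B ^ α = α ^ (α / (1 - α)) * (A / B ^ α) ^ (1 / (1 - α)) := by
  have hα₁' : 1 - α ≠ 0 := sub_ne_zero.2 hα₁.symm
  have hA_pow : A ^ (1 / (1 - α)) = A * A ^ (α / (1 - α)) := by
    rw [show 1 / (1 - α) = 1 + α / (1 - α) by field_simp; ring, Real.rpow_add hA, Real.rpow_one]
  rw [cutoffRatio, ← Real.rpow_mul (by positivity), inv_mul_eq_div,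
    Real.div_rpow (by positivity) hB, Real.mul_rpow hα₀ hA.le,
    Real.div_rpow hA.le (by positivity), ← Real.rpow_mul hB, mul_one_div, hA_pow]
  ring

theorem cobbDouglas_cutoffRatio_add (hA : 0 < A) (hα₀ : 0 < α) (hα₁ : α ≠ 1) (hB : 0 < B)
    (hX : 0 ≤ X) :
    cobbDouglas A α (cutoffRatio A α B * X) X + B * (H - cutoffRatio A α B * X) =
      B * H + (1 - α) * α ^ (α / (1 - α)) * (A / B ^ α) ^ (1 / (1 - α)) * X := by
  have hk := cutoffRatio_pos hA hα₀ hB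
  have hwage := laborMarginalProduct_cutoffRatio hA hα₀ hα₁ hB
  rw [laborMarginalProduct, Real.rpow_sub_one hk.ne', mul_div_assoc', div_eq_iff hk.ne'] at hwage
  rw [cobbDouglas_mul_self hk.le hX]
  linear_combination X * hwage + (1 - α) * X * mul_cutoffRatio_rpow hA hα₀.le hα₁ hB.le

end CobbDouglas

/-- Aggregation of a Cobb-Douglas land-intensive sector `A₁ H₁^α X₁^{1-α}` and a linear
labor-only sector `A₂ H₂`: the maximal aggregate output over all allocations of total
labor `H` and total land `X` is `A₁ H^α X^{1-α}` when `α A₁/A₂ ≥ (H/X)^{1-α}`, and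
`A₂ H + (1-α) α^{α/(1-α)} (A₁/A₂^α)^{1/(1-α)} X` otherwise. -/
theorem two_sector_aggregate_production
    (α A1 A2 : ℝ) (hα : α ∈ Set.Ioo (0 : ℝ) 1) (hA1 : 0 < A1) (hA2 : 0 < A2)
    (H X : ℝ) (hH : 0 < H) (hX : 0 < X) :
    (α * A1 / A2 ≥ (H / X) ^ (1 - α) →
      IsGreatest
        {y : ℝ | ∃ H1 H2 X1 X2 : ℝ, 0 ≤ H1 ∧ 0 ≤ H2 ∧ 0 ≤ X1 ∧ 0 ≤ X2 ∧
          H1 + H2 = H ∧ X1 + X2 = X ∧ y = A1 * H1 ^ α * X1 ^ (1 - α) + A2 * H2}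
        (A1 * H ^ α * X ^ (1 - α))) ∧
    (α * A1 / A2 < (H / X) ^ (1 - α) →
      IsGreatest
        {y : ℝ | ∃ H1 H2 X1 X2 : ℝ, 0 ≤ H1 ∧ 0 ≤ H2 ∧ 0 ≤ X1 ∧ 0 ≤ X2 ∧
          H1 + H2 = H ∧ X1 + X2 = X ∧ y = A1 * H1 ^ α * X1 ^ (1 - α) + A2 * H2}
        (A2 * H + (1 - α) * α ^ (α / (1 - α)) * (A1 / A2 ^ α) ^ (1 / (1 - α)) * X)) := by
  obtain ⟨hα₀, hα₁⟩ := hα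
  refine ⟨fun hcorner => ?_, fun hinterior => ?_⟩
  · have hH_eq : H / X * X = H := div_mul_cancel₀ H hX.ne'
    have hopt := isGreatest_aggregateOutputs_cobbDouglas hA1.le hα₀.le hα₁.le (div_pos hH hX)
      hX.le hH_eq.le ((le_laborMarginalProduct_iff hA2 (div_pos hH hX)).2 hcorner) (by simp [hH_eq])
    rwa [hH_eq, sub_self, mul_zero, add_zero] at hopt
  · have hk := cutoffRatio_pos hA1 hα₀ hA2
    have hwage := laborMarginalProduct_cutoffRatio hA1 hα₀ hα₁.ne hA2
    have hkX : cutoffRatio A1 α A2 * X < H := (lt_div_iff₀ hX).1 <|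
      (cutoffRatio_lt_iff hA1.le hα₀.le hα₁ hA2.le (div_pos hH hX).le).2 hinterior
    rw [← cobbDouglas_cutoffRatio_add hA1 hα₀ hα₁.ne hA2 hX.le]
    exact isGreatest_aggregateOutputs_cobbDouglas hA1.le hα₀.le hα₁.le hk hX.le hkX.le
      hwage.ge (by simp [hwage])
end

section
/- Let α ∈ (0,1) and A_1, A_2 > 0. Define w = max{α A_1, A_2}, H_1 = min{α A_1/A_2, 1}^{1/(1−α)}, H_2 = 1 − H_1, and r = (1−α) A_1 min{α A_1/A_2, 1}^{α/(1−α)}. Then (w, r, H_1, H_2) is the unique tuple with H_1 ∈ (0,1], H_2 = 1 − H_1 ≥ 0, satisfying the profit-maximization first-order conditions w = α A_1 H_1^{α−1}, r = (1−α) A_1 H_1^α, and w ≥ A_2 with equality whenever H_2 > 0. -/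
/-!
Write `c = α * A1` and `a = A2`. Since `c * H ^ (α - 1) = c / H ^ (1 - α)`, in the variable
`x = H ^ (1 - α)` the conditions on labor and the wage form the complementarity problem `x ≤ 1`,
`a ≤ c / x`, with equality in at least one of the two. Its only positive solution is
`x = min (c / a) 1`, so the wage is `c / x = max c a`, and `H` is the `1 - α`-th root of `x`.
-/

section OrderedField

variable {K : Type*} [Field K] [LinearOrder K] [IsStrictOrderedRing K] {a c x : K}

theorem div_min_div_one (hc : c ≠ 0) (ha : 0 < a) : c / min (c / a) 1 = max c a := by
  rcases le_total c a with h | h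
  · rw [min_eq_left ((div_le_one ha).2 h), max_eq_right h, div_div_cancel₀ hc]
  · rw [min_eq_right ((one_le_div ha).2 h), max_eq_left h, div_one]

theorem eq_min_div_one_iff (ha : 0 < a) (hx : 0 < x) :
    x = min (c / a) 1 ↔ x ≤ 1 ∧ a ≤ c / x ∧ (x < 1 → c / x = a) := by
  have le_iff : a ≤ c / x ↔ x ≤ c / a := le_div_comm₀ ha hx
  have eq_iff : c / x = a ↔ x = c / a := by
    rw [div_eq_iff hx.ne', eq_div_iff ha.ne', mul_comm, eq_comm]
  rw [le_iff, eq_iff]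
  constructor
  · intro h
    refine ⟨h ▸ min_le_right _ _, h ▸ min_le_left _ _, fun hlt => ?_⟩
    exact (min_choice (c / a) 1).elim h.trans fun h1 => absurd (h.trans h1) hlt.ne
  · rintro ⟨hx1, hxc, hslack⟩
    rcases hx1.lt_or_eq with hlt | heq
    · rw [← hslack hlt, min_eq_left hx1]
    · rw [heq, min_eq_right (heq ▸ hxc)]

end OrderedField

theorem mul_rpow_sub_one_eq_div {x : ℝ} (hx : 0 ≤ x) (c α : ℝ) :
    c * x ^ (α - 1) = c / x ^ (1 - α) := by
  rw [← neg_sub, Real.rpow_neg hx, div_eq_mul_inv]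

theorem labor_foc_iff_eq_rpow_min {α a c H : ℝ} (hα : α < 1) (ha : 0 < a) (hc : 0 < c) :
    ((0 < H ∧ H ≤ 1) ∧ a ≤ c * H ^ (α - 1) ∧ (H < 1 → c * H ^ (α - 1) = a)) ↔
      H = min (c / a) 1 ^ (1 / (1 - α)) := by
  have hβ : 0 < 1 - α := sub_pos.2 hα
  have hm : 0 < min (c / a) 1 := lt_min (div_pos hc ha) one_pos
  have of_pos (hH : 0 < H) : H = min (c / a) 1 ^ (1 / (1 - α)) ↔
      H ≤ 1 ∧ a ≤ c * H ^ (α - 1) ∧ (H < 1 → c * H ^ (α - 1) = a) := by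
    have le_one_iff : H ^ (1 - α) ≤ 1 ↔ H ≤ 1 := by
      simpa only [Real.one_rpow] using Real.rpow_le_rpow_iff hH.le zero_le_one hβ
    rw [one_div, Real.eq_rpow_inv hH.le hm.le hβ.ne',
      eq_min_div_one_iff ha (Real.rpow_pos_of_pos hH _), mul_rpow_sub_one_eq_div hH.le,
      le_one_iff, Real.rpow_lt_one_iff' hH.le hβ]
  constructor
  · rintro ⟨⟨hH, hH1⟩, hwage⟩
    exact (of_pos hH).2 ⟨hH1, hwage⟩
  · intro h
    have hH : 0 < H := h ▸ Real.rpow_pos_of_pos hm _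
    obtain ⟨hH1, hwage⟩ := (of_pos hH).1 h
    exact ⟨⟨hH, hH1⟩, hwage⟩

theorem mul_rpow_min_rpow_eq_max {α a c : ℝ} (hα : α < 1) (ha : 0 < a) (hc : 0 < c) :
    c * (min (c / a) 1 ^ (1 / (1 - α))) ^ (α - 1) = max c a := by
  have hm : 0 ≤ min (c / a) 1 := le_min (div_pos hc ha).le zero_le_one
  rw [mul_rpow_sub_one_eq_div (Real.rpow_nonneg hm _), one_div,
    Real.rpow_inv_rpow hm (sub_pos.2 hα).ne', div_min_div_one hc.ne' ha]

/-- The conditions on a wage `w`, a land rent `r` and an allocation `H1`, `H2` of the unit labor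
supply under which sector 1, with technology `A1 * H1 ^ α` on the unit of land, and sector 2, with
technology `A2 * H2`, both maximize profits. Sector 2 may be idle, so its condition is
complementary slackness. -/
def FirstOrderConditions (α A1 A2 w r H1 H2 : ℝ) : Prop :=
  (0 < H1 ∧ H1 ≤ 1) ∧ H2 = 1 - H1 ∧ 0 ≤ H2 ∧
    w = α * A1 * H1 ^ (α - 1) ∧ r = (1 - α) * A1 * H1 ^ α ∧
    A2 ≤ w ∧ (0 < H2 → w = A2)

theorem firstOrderConditions_iff_labor_foc {α A1 A2 w r H1 H2 : ℝ} :
    FirstOrderConditions α A1 A2 w r H1 H2 ↔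
      ((0 < H1 ∧ H1 ≤ 1) ∧ A2 ≤ α * A1 * H1 ^ (α - 1) ∧
        (H1 < 1 → α * A1 * H1 ^ (α - 1) = A2)) ∧
      w = α * A1 * H1 ^ (α - 1) ∧ H2 = 1 - H1 ∧ r = (1 - α) * A1 * H1 ^ α := by
  constructor
  · rintro ⟨hH1, rfl, -, rfl, rfl, hle, hslack⟩
    exact ⟨⟨hH1, hle, fun h => hslack (sub_pos.2 h)⟩, rfl, rfl, rfl⟩
  · rintro ⟨⟨hH1, hle, hslack⟩, rfl, rfl, rfl⟩
    exact ⟨hH1, rfl, sub_nonneg.2 hH1.2, rfl, rfl, hle, fun h => hslack (sub_pos.1 h)⟩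

theorem firstOrderConditions_iff {α A1 A2 w r H1 H2 : ℝ}
    (hα : α ∈ Set.Ioo (0 : ℝ) 1) (hA1 : 0 < A1) (hA2 : 0 < A2) :
    FirstOrderConditions α A1 A2 w r H1 H2 ↔
      w = max (α * A1) A2 ∧
      H1 = min (α * A1 / A2) 1 ^ (1 / (1 - α)) ∧
      H2 = 1 - min (α * A1 / A2) 1 ^ (1 / (1 - α)) ∧
      r = (1 - α) * A1 * min (α * A1 / A2) 1 ^ (α / (1 - α)) := by
  have hc : 0 < α * A1 := mul_pos hα.1 hA1
  have hm : 0 ≤ min (α * A1 / A2) 1 := le_min (div_pos hc hA2).le zero_le_one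
  rw [firstOrderConditions_iff_labor_foc, labor_foc_iff_eq_rpow_min hα.2 hA2 hc,
    and_left_comm (a := w = max _ _), and_congr_right_iff]
  rintro rfl
  rw [mul_rpow_min_rpow_eq_max hα.2 hA2 hc, ← Real.rpow_mul hm, one_div_mul_eq_div]

/-- In the two-sector OLG model with unit land and labor supply, the tuple
`w = max {α A₁, A₂}`, `H₁ = min {α A₁/A₂, 1}^{1/(1-α)}`, `H₂ = 1 - H₁`,
`r = (1-α) A₁ min {α A₁/A₂, 1}^{α/(1-α)}` is the unique tuple with `H₁ ∈ (0,1]`,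
`H₂ = 1 - H₁ ≥ 0` satisfying the profit-maximization first-order conditions
`w = α A₁ H₁^{α-1}`, `r = (1-α) A₁ H₁^α`, and `w ≥ A₂` with equality whenever `H₂ > 0`. -/
theorem two_sector_foc_unique_solution
    (α A1 A2 : ℝ) (hα : α ∈ Set.Ioo (0 : ℝ) 1) (hA1 : 0 < A1) (hA2 : 0 < A2) :
    (let w := max (α * A1) A2
     let H1 := (min (α * A1 / A2) 1) ^ (1 / (1 - α))
     let H2 := 1 - H1
     let r := (1 - α) * A1 * (min (α * A1 / A2) 1) ^ (α / (1 - α))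
     (0 < H1 ∧ H1 ≤ 1) ∧ H2 = 1 - H1 ∧ 0 ≤ H2 ∧
       w = α * A1 * H1 ^ (α - 1) ∧ r = (1 - α) * A1 * H1 ^ α ∧
       A2 ≤ w ∧ (0 < H2 → w = A2)) ∧
    ∀ w r H1 H2 : ℝ,
      ((0 < H1 ∧ H1 ≤ 1) ∧ H2 = 1 - H1 ∧ 0 ≤ H2 ∧
        w = α * A1 * H1 ^ (α - 1) ∧ r = (1 - α) * A1 * H1 ^ α ∧
        A2 ≤ w ∧ (0 < H2 → w = A2)) →
      w = max (α * A1) A2 ∧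
      H1 = (min (α * A1 / A2) 1) ^ (1 / (1 - α)) ∧
      H2 = 1 - (min (α * A1 / A2) 1) ^ (1 / (1 - α)) ∧
      r = (1 - α) * A1 * (min (α * A1 / A2) 1) ^ (α / (1 - α)) :=
  ⟨(firstOrderConditions_iff hα hA1 hA2).2 ⟨rfl, rfl, rfl, rfl⟩,
    fun _ _ _ _ => (firstOrderConditions_iff hα hA1 hA2).1⟩
end

section
/- Let E: ℝ²_{>0} → ℝ_{>0} be a twice continuously differentiable neoclassical production function with E_{HX} > 0, let α ∈ (0,1), and define F(H,X) = H^α E(H,X)^{1−α}. Then F is a neoclassical production function and its elasticity of substitution satisfies, at every (H,X) ∈ ℝ²_{>0}, σ_F(H,X) − 1 = (σ_E(H,X) − 1) / ( 1 + α · (X E_X(H,X))/(H E_H(H,X)) · σ_E(H,X) ). In particular, σ_E(H,X) > 1 implies σ_F(H,X) > 1. -/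
noncomputable section

/-!
Cross-differentiating logarithms explains the formula. Since
`∂² log F / ∂H ∂X = (F_H / F) (F_X / F) (1 / σ_F - 1)` for every production function, and since
`log F = α log H + (1 - α) log E` gives `(log F)_{HX} = (1 - α) (log E)_{HX}` and
`F_X / F = (1 - α) E_X / E`, it follows that `(1 / σ_F - 1) F_H / F = (1 / σ_E - 1) E_H / E`.
Euler's identity `E = H E_H + X E_X` turns `F_H / F = α / H + (1 - α) E_H / E` into
`(1 + k) E_H / E` with `k = α X E_X / (H E_H)`, so `(1 / σ_F - 1) (1 + k) = 1 / σ_E - 1`.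
-/

section WeightedGeometricMean

variable {w v : ℝ}

theorem mul_rpow_mul_mul_rpow_of_add_eq_one (hw : 0 ≤ w) (hv : 0 ≤ v) (hwv : w + v = 1)
    {t x y : ℝ} (ht : 0 ≤ t) (hx : 0 ≤ x) (hy : 0 ≤ y) :
    (t * x) ^ w * (t * y) ^ v = t * (x ^ w * y ^ v) := by
  have ht_split : t ^ w * t ^ v = t := by
    rw [← Real.rpow_add_of_nonneg ht hw hv, hwv, Real.rpow_one]
  rw [Real.mul_rpow ht hx, Real.mul_rpow ht hy, mul_mul_mul_comm, ht_split]

theorem rpow_mul_rpow_le_mul_weighted_div (hw : 0 ≤ w) (hv : 0 ≤ v) (hwv : w + v = 1)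
    {x y A B : ℝ} (hx : 0 ≤ x) (hy : 0 ≤ y) (hxA : x ≤ A) (hyB : y ≤ B) :
    x ^ w * y ^ v ≤ A ^ w * B ^ v * (w * (x / A) + v * (y / B)) := by
  have hA : 0 ≤ A := hx.trans hxA
  have hB : 0 ≤ B := hy.trans hyB
  -- If `A = 0` then `x = 0`, so the convention `x / 0 = 0` does no harm here.
  have hxA' : A * (x / A) = x := mul_div_cancel_of_imp' fun h => by linarith
  have hyB' : B * (y / B) = y := mul_div_cancel_of_imp' fun h => by linarith
  calc x ^ w * y ^ v
      = (A * (x / A)) ^ w * (B * (y / B)) ^ v := by rw [hxA', hyB']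
    _ = A ^ w * B ^ v * ((x / A) ^ w * (y / B) ^ v) := by
        rw [Real.mul_rpow hA (by positivity), Real.mul_rpow hB (by positivity), mul_mul_mul_comm]
    _ ≤ A ^ w * B ^ v * (w * (x / A) + v * (y / B)) := by
        gcongr
        exact Real.geom_mean_le_arith_mean2_weighted hw hv (by positivity) (by positivity) hwv

theorem rpow_mul_rpow_add_rpow_mul_rpow_le (hw : 0 ≤ w) (hv : 0 ≤ v) (hwv : w + v = 1)
    {x y x' y' : ℝ} (hx : 0 ≤ x) (hy : 0 ≤ y) (hx' : 0 ≤ x') (hy' : 0 ≤ y') :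
    x ^ w * y ^ v + x' ^ w * y' ^ v ≤ (x + x') ^ w * (y + y') ^ v := by
  set A := x + x' with hA
  set B := y + y' with hB
  have hsum : w * (x / A) + v * (y / B) + (w * (x' / A) + v * (y' / B)) ≤ 1 := calc
    _ = w * (A / A) + v * (B / B) := by simp only [hA, hB, add_div]; ring
    _ ≤ w * 1 + v * 1 := by gcongr <;> exact div_self_le_one _
    _ = 1 := by rw [mul_one, mul_one, hwv]
  calc x ^ w * y ^ v + x' ^ w * y' ^ v
      ≤ A ^ w * B ^ v * (w * (x / A) + v * (y / B)) +
          A ^ w * B ^ v * (w * (x' / A) + v * (y' / B)) := by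
        apply add_le_add <;> apply rpow_mul_rpow_le_mul_weighted_div hw hv hwv <;> linarith
    _ = A ^ w * B ^ v * (w * (x / A) + v * (y / B) + (w * (x' / A) + v * (y' / B))) := by ring
    _ ≤ A ^ w * B ^ v := mul_le_of_le_one_right (by positivity) hsum

theorem concaveOn_rpow_mul_rpow {V : Type*} [AddCommGroup V] [Module ℝ V] {s : Set V}
    {f g : V → ℝ} (hw : 0 ≤ w) (hv : 0 ≤ v) (hwv : w + v = 1)
    (hf : ConcaveOn ℝ s f) (hg : ConcaveOn ℝ s g)
    (hf₀ : ∀ x ∈ s, 0 ≤ f x) (hg₀ : ∀ x ∈ s, 0 ≤ g x) :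
    ConcaveOn ℝ s fun x => f x ^ w * g x ^ v := by
  refine ⟨hf.1, fun x hx y hy a b ha hb hab => ?_⟩
  have hfx := hf₀ x hx
  have hfy := hf₀ y hy
  have hgx := hg₀ x hx
  have hgy := hg₀ y hy
  calc a * (f x ^ w * g x ^ v) + b * (f y ^ w * g y ^ v)
      = (a * f x) ^ w * (a * g x) ^ v + (b * f y) ^ w * (b * g y) ^ v := by
        rw [mul_rpow_mul_mul_rpow_of_add_eq_one hw hv hwv ha hfx hgx,
          mul_rpow_mul_mul_rpow_of_add_eq_one hw hv hwv hb hfy hgy]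
    _ ≤ (a * f x + b * f y) ^ w * (a * g x + b * g y) ^ v := by
        apply rpow_mul_rpow_add_rpow_mul_rpow_le hw hv hwv <;> positivity
    _ ≤ f (a • x + b • y) ^ w * g (a • x + b • y) ^ v := by
        have hfxy : a * f x + b * f y ≤ f (a • x + b • y) := hf.2 hx hy ha hb hab
        have hgxy : a * g x + b * g y ≤ g (a • x + b • y) := hg.2 hx hy ha hb hab
        have hf_comb := hf₀ _ (hf.1 hx hy ha hb hab)
        gcongr

end WeightedGeometricMean

theorem logDeriv_rpow_const {f : ℝ → ℝ} {x : ℝ} (p : ℝ) (hf : DifferentiableAt ℝ f x)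
    (hfx : 0 < f x) : logDeriv (fun y => f y ^ p) x = p * logDeriv f x := by
  rw [logDeriv_apply, logDeriv_apply, (hf.hasDerivAt.rpow_const (.inl hfx.ne')).deriv,
    Real.rpow_sub_one hfx.ne']
  field_simp

section PartialDerivatives

variable {F : ℝ → ℝ → ℝ} {H X : ℝ}

theorem isOpen_posQuadrant : IsOpen {p : ℝ × ℝ | 0 < p.1 ∧ 0 < p.2} :=
  (isOpen_lt continuous_const continuous_fst).inter (isOpen_lt continuous_const continuous_snd)

theorem hasDerivAt_fst_of_hasFDerivAt {L : ℝ × ℝ →L[ℝ] ℝ}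
    (hF : HasFDerivAt (fun p : ℝ × ℝ => F p.1 p.2) L (H, X)) :
    HasDerivAt (fun h => F h X) (L (1, 0)) H :=
  HasFDerivAt.comp_hasDerivAt (f := fun h : ℝ => (h, X)) H hF
    ((hasDerivAt_id H).prodMk (hasDerivAt_const H X))

theorem hasDerivAt_snd_of_hasFDerivAt {L : ℝ × ℝ →L[ℝ] ℝ}
    (hF : HasFDerivAt (fun p : ℝ × ℝ => F p.1 p.2) L (H, X)) :
    HasDerivAt (fun x => F H x) (L (0, 1)) X :=
  HasFDerivAt.comp_hasDerivAt (f := fun x : ℝ => (H, x)) X hF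
    ((hasDerivAt_const X H).prodMk (hasDerivAt_id X))

theorem fderiv_apply_eq_mul_dH_add_mul_dX
    (hF : DifferentiableAt ℝ (fun p : ℝ × ℝ => F p.1 p.2) (H, X)) (a b : ℝ) :
    fderiv ℝ (fun p : ℝ × ℝ => F p.1 p.2) (H, X) (a, b) = a * dH F H X + b * dX F H X := by
  have hab : (a, b) = a • ((1 : ℝ), (0 : ℝ)) + b • ((0 : ℝ), (1 : ℝ)) := by simp
  rw [dH, dX, (hasDerivAt_fst_of_hasFDerivAt hF.hasFDerivAt).deriv,
    (hasDerivAt_snd_of_hasFDerivAt hF.hasFDerivAt).deriv, hab, map_add, map_smul, map_smul,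
    smul_eq_mul, smul_eq_mul]

theorem mul_dH_add_mul_dX_of_homogeneous
    (hF : DifferentiableAt ℝ (fun p : ℝ × ℝ => F p.1 p.2) (H, X))
    (hom : ∀ ⦃l : ℝ⦄, 0 < l → F (l * H) (l * X) = l * F H X) :
    H * dH F H X + X * dX F H X = F H X := by
  have hray : HasDerivAt (fun l : ℝ => (l * H, l * X)) (H, X) 1 :=
    (hasDerivAt_mul_const H).prodMk (hasDerivAt_mul_const X)
  have hchain : HasDerivAt (fun l : ℝ => F (l * H) (l * X)) (H * dH F H X + X * dX F H X) 1 := by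
    rw [← fderiv_apply_eq_mul_dH_add_mul_dX hF]
    exact hF.hasFDerivAt.comp_hasDerivAt_of_eq 1 hray (by simp)
  have hlinear : HasDerivAt (fun l : ℝ => F (l * H) (l * X)) (F H X) 1 := by
    refine (hasDerivAt_mul_const (F H X)).congr_of_eventuallyEq ?_
    filter_upwards [lt_mem_nhds one_pos] with l hl using hom hl
  exact hchain.unique hlinear

end PartialDerivatives

/-- The cross partial derivative `∂² log F / ∂H ∂X`, through which the elasticity of substitution
is computed. The inner derivative is encoded as `logDeriv`, that is, as `F_H / F`. -/
def dlogHX (F : ℝ → ℝ → ℝ) (H X : ℝ) : ℝ :=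
  deriv (fun x => logDeriv (fun h => F h x) H) X

theorem dlogHX_eq_mul_inv_sigmaF_sub_one {F : ℝ → ℝ → ℝ} {H X : ℝ}
    (hF : DifferentiableAt ℝ (fun x => F H x) X) (hFH : DifferentiableAt ℝ (fun x => dH F H x) X)
    (hF₀ : F H X ≠ 0) (hFH₀ : dH F H X ≠ 0) (hFX₀ : dX F H X ≠ 0) :
    dlogHX F H X = dH F H X / F H X * (dX F H X / F H X) * ((sigmaF F H X)⁻¹ - 1) := by
  have hquot : dlogHX F H X =
      (dHX F H X * F H X - dH F H X * dX F H X) / F H X ^ 2 :=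
    (hFH.hasDerivAt.div hF.hasDerivAt hF₀).deriv
  rw [hquot, sigmaF, inv_div]
  field_simp

namespace Neoclassical

variable {F : ℝ → ℝ → ℝ} {H X : ℝ}

theorem differentiableAt (hF : Neoclassical F) (hH : 0 < H) (hX : 0 < X) :
    DifferentiableAt ℝ (fun p : ℝ × ℝ => F p.1 p.2) (H, X) :=
  hF.contDiff.differentiableOn_one.differentiableAt (isOpen_posQuadrant.mem_nhds ⟨hH, hX⟩)

theorem differentiableAt_fst (hF : Neoclassical F) (hH : 0 < H) (hX : 0 < X) :
    DifferentiableAt ℝ (fun h => F h X) H :=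
  (hasDerivAt_fst_of_hasFDerivAt (hF.differentiableAt hH hX).hasFDerivAt).differentiableAt

theorem differentiableAt_snd (hF : Neoclassical F) (hH : 0 < H) (hX : 0 < X) :
    DifferentiableAt ℝ (fun x => F H x) X :=
  (hasDerivAt_snd_of_hasFDerivAt (hF.differentiableAt hH hX).hasFDerivAt).differentiableAt

theorem mul_dH_add_mul_dX (hF : Neoclassical F) (hH : 0 < H) (hX : 0 < X) :
    H * dH F H X + X * dX F H X = F H X :=
  mul_dH_add_mul_dX_of_homogeneous (hF.differentiableAt hH hX) fun _ hl => hF.homog hl hH hX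

theorem dlogHX_eq (hF : Neoclassical F) (hH : 0 < H) (hX : 0 < X)
    (hFH : DifferentiableAt ℝ (fun x => dH F H x) X) :
    dlogHX F H X = dH F H X / F H X * (dX F H X / F H X) * ((sigmaF F H X)⁻¹ - 1) :=
  dlogHX_eq_mul_inv_sigmaF_sub_one (hF.differentiableAt_snd hH hX) hFH (hF.pos hH hX).ne'
    (hF.dH_pos hH hX).ne' (hF.dX_pos hH hX).ne'

theorem sigmaF_pos (hF : Neoclassical F) (hH : 0 < H) (hX : 0 < X) (hFHX : 0 < dHX F H X) :
    0 < sigmaF F H X :=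
  div_pos (mul_pos (hF.dH_pos hH hX) (hF.dX_pos hH hX)) (mul_pos (hF.pos hH hX) hFHX)

end Neoclassical

/-- The production function `F(H, X) = H ^ α E(H, X) ^ (1 - α)`, in which labor and the composite
input `E` are nested in a Cobb-Douglas technology with exponent `α` on labor. -/
def cobbDouglasNest (α : ℝ) (E : ℝ → ℝ → ℝ) (H X : ℝ) : ℝ := H ^ α * E H X ^ (1 - α)

section CobbDouglasNest

variable {E : ℝ → ℝ → ℝ} {H X : ℝ}

theorem cobbDouglasNest_pos (α : ℝ) (hH : 0 < H) (hE : 0 < E H X) :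
    0 < cobbDouglasNest α E H X :=
  mul_pos (Real.rpow_pos_of_pos hH _) (Real.rpow_pos_of_pos hE _)

theorem dH_cobbDouglasNest_div (α : ℝ) (hH : 0 < H) (hE : 0 < E H X)
    (hEd : DifferentiableAt ℝ (fun h => E h X) H) :
    dH (cobbDouglasNest α E) H X / cobbDouglasNest α E H X =
      α / H + (1 - α) * (dH E H X / E H X) := by
  have hlog := logDeriv_mul H (Real.rpow_pos_of_pos hH α).ne'
    (Real.rpow_pos_of_pos hE (1 - α)).ne' (Real.differentiableAt_rpow_const_of_ne α hH.ne')
    (hEd.rpow_const (.inl hE.ne'))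
  rw [logDeriv_rpow_const α differentiableAt_fun_id hH, logDeriv_rpow_const (1 - α) hEd hE,
    logDeriv_id', mul_one_div] at hlog
  exact hlog

theorem dX_cobbDouglasNest_div (α : ℝ) (hH : 0 < H) (hE : 0 < E H X)
    (hEd : DifferentiableAt ℝ (fun x => E H x) X) :
    dX (cobbDouglasNest α E) H X / cobbDouglasNest α E H X = (1 - α) * (dX E H X / E H X) :=
  (logDeriv_const_mul X (H ^ α) (Real.rpow_pos_of_pos hH α).ne').trans
    (logDeriv_rpow_const (1 - α) hEd hE)

theorem neoclassical_cobbDouglasNest {α : ℝ} (hE : Neoclassical E)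
    (hα : α ∈ Set.Ico (0 : ℝ) 1) : Neoclassical (cobbDouglasNest α E) where
  pos H X hH hX := cobbDouglasNest_pos α hH (hE.pos hH hX)
  homog l H X hl hH hX := by
    rw [cobbDouglasNest, hE.homog hl hH hX]
    exact mul_rpow_mul_mul_rpow_of_add_eq_one hα.1 (sub_pos.2 hα.2).le (add_sub_cancel α 1) hl.le
      hH.le (hE.pos hH hX).le
  concave := concaveOn_rpow_mul_rpow hα.1 (sub_pos.2 hα.2).le (add_sub_cancel α 1)
    ((LinearMap.fst ℝ ℝ ℝ).concaveOn hE.concave.1) hE.concave (fun _ hp => hp.1.le)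
    fun _ hp => (hE.pos hp.1 hp.2).le
  contDiff := (contDiffOn_fst.rpow_const_of_ne fun _ hp => hp.1.ne').mul
    (hE.contDiff.rpow_const_of_ne fun _ hp => (hE.pos hp.1 hp.2).ne')
  dH_pos H X hH hX := by
    have hE₀ := hE.pos hH hX
    have hEH := hE.dH_pos hH hX
    have hα₀ := hα.1
    have hα₁ := sub_pos.2 hα.2
    rw [← div_pos_iff_of_pos_right (cobbDouglasNest_pos α hH hE₀),
      dH_cobbDouglasNest_div α hH hE₀ (hE.differentiableAt_fst hH hX)]
    positivity
  dX_pos H X hH hX := by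
    have hE₀ := hE.pos hH hX
    have hEX := hE.dX_pos hH hX
    have hα₁ := sub_pos.2 hα.2
    rw [← div_pos_iff_of_pos_right (cobbDouglasNest_pos α hH hE₀),
      dX_cobbDouglasNest_div α hH hE₀ (hE.differentiableAt_snd hH hX)]
    positivity

theorem dH_cobbDouglasNest_div_eq_mul (hE : Neoclassical E) (α : ℝ) (hH : 0 < H) (hX : 0 < X) :
    dH (cobbDouglasNest α E) H X / cobbDouglasNest α E H X =
      dH E H X / E H X * (1 + α * (X * dX E H X) / (H * dH E H X)) := by
  have hE₀ := hE.pos hH hX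
  have hEH := hE.dH_pos hH hX
  rw [dH_cobbDouglasNest_div α hH hE₀ (hE.differentiableAt_fst hH hX)]
  field_simp
  linear_combination (-α) * hE.mul_dH_add_mul_dX hH hX

theorem differentiableAt_dH_cobbDouglasNest (hE : Neoclassical E) (α : ℝ) (hH : 0 < H)
    (hX : 0 < X) (hEH : DifferentiableAt ℝ (fun x => dH E H x) X) :
    DifferentiableAt ℝ (fun x => dH (cobbDouglasNest α E) H x) X := by
  have hEX := hE.differentiableAt_snd hH hX
  have hE₀ := (hE.pos hH hX).ne'
  have hnest : DifferentiableAt ℝ (fun x => cobbDouglasNest α E H x) X :=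
    (hEX.rpow_const (.inl hE₀)).const_mul _
  have hdlog : DifferentiableAt ℝ (fun x => α / H + (1 - α) * (dH E H x / E H x)) X :=
    ((hEH.div hEX hE₀).const_mul (1 - α)).const_add (α / H)
  refine (hdlog.mul hnest).congr_of_eventuallyEq ?_
  filter_upwards [lt_mem_nhds hX] with x hx
  have hEx := hE.pos hH hx
  exact (div_eq_iff (cobbDouglasNest_pos α hH hEx).ne').1
    (dH_cobbDouglasNest_div α hH hEx (hE.differentiableAt_fst hH hx))

theorem dlogHX_cobbDouglasNest (hE : Neoclassical E) (α : ℝ) (hH : 0 < H) (hX : 0 < X) :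
    dlogHX (cobbDouglasNest α E) H X = (1 - α) * dlogHX E H X := by
  have hlog : (fun x => logDeriv (fun h => cobbDouglasNest α E h x) H) =ᶠ[nhds X]
      fun x => α / H + (1 - α) * logDeriv (fun h => E h x) H := by
    filter_upwards [lt_mem_nhds hX] with x hx
    exact dH_cobbDouglasNest_div α hH (hE.pos hH hx) (hE.differentiableAt_fst hH hx)
  rw [dlogHX, hlog.deriv_eq, deriv_const_add, deriv_const_mul_field, dlogHX]

theorem inv_sigmaF_cobbDouglasNest_sub_one_mul {α : ℝ} (hE : Neoclassical E)
    (hα : α ∈ Set.Ico (0 : ℝ) 1) (hH : 0 < H) (hX : 0 < X)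
    (hEH : DifferentiableAt ℝ (fun x => dH E H x) X) :
    ((sigmaF (cobbDouglasNest α E) H X)⁻¹ - 1) * (1 + α * (X * dX E H X) / (H * dH E H X)) =
      (sigmaF E H X)⁻¹ - 1 := by
  have hF := neoclassical_cobbDouglasNest hE hα
  have hlogE := hE.dlogHX_eq hH hX hEH
  have hlogF := hF.dlogHX_eq hH hX (differentiableAt_dH_cobbDouglasNest hE α hH hX hEH)
  rw [dlogHX_cobbDouglasNest hE α hH hX, hlogE, dH_cobbDouglasNest_div_eq_mul hE α hH hX,
    dX_cobbDouglasNest_div α hH (hE.pos hH hX) (hE.differentiableAt_snd hH hX)] at hlogF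
  have hcoeff : (1 - α) * (dH E H X / E H X * (dX E H X / E H X)) ≠ 0 :=
    (mul_pos (sub_pos.2 hα.2) (mul_pos (div_pos (hE.dH_pos hH hX) (hE.pos hH hX))
      (div_pos (hE.dX_pos hH hX) (hE.pos hH hX)))).ne'
  exact mul_left_cancel₀ hcoeff (by linear_combination -hlogF)

end CobbDouglasNest

theorem sub_one_eq_div_of_inv_sub_one_mul {s S k : ℝ} (hs : 0 < s) (hk : 0 ≤ k)
    (h : (S⁻¹ - 1) * (1 + k) = s⁻¹ - 1) : S - 1 = (s - 1) / (1 + k * s) := by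
  have hS_inv : S⁻¹ = (s⁻¹ - 1) / (1 + k) + 1 := by
    rw [← h, mul_div_cancel_right₀ _ (by positivity), sub_add_cancel]
  have hS : S = s * (1 + k) / (1 + k * s) := by
    rw [← inv_inj, hS_inv]
    field_simp
    ring
  rw [hS]
  field_simp
  ring

theorem elasticity_of_substitution_composite_general {E : ℝ → ℝ → ℝ} (hE : Neoclassical E)
    {α : ℝ} (hα : α ∈ Set.Ico (0 : ℝ) 1) :
    Neoclassical (cobbDouglasNest α E) ∧
    ∀ ⦃H X : ℝ⦄, 0 < H → 0 < X → 0 < dHX E H X →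
      sigmaF (cobbDouglasNest α E) H X - 1 =
        (sigmaF E H X - 1) / (1 + α * (X * dX E H X) / (H * dH E H X) * sigmaF E H X) ∧
      (1 < sigmaF E H X → 1 < sigmaF (cobbDouglasNest α E) H X) := by
  refine ⟨neoclassical_cobbDouglasNest hE hα, fun H X hH hX hEHX => ?_⟩
  have hα₀ := hα.1
  have hEH := hE.dH_pos hH hX
  have hEX := hE.dX_pos hH hX
  have hσ := hE.sigmaF_pos hH hX hEHX
  have hformula := sub_one_eq_div_of_inv_sub_one_mul hσ (by positivity)
    (inv_sigmaF_cobbDouglasNest_sub_one_mul hE hα hH hX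
      (differentiableAt_of_deriv_ne_zero hEHX.ne'))
  refine ⟨hformula, fun hσ₁ => ?_⟩
  rw [← sub_pos, hformula]
  exact div_pos (sub_pos.2 hσ₁) (by positivity)

/-- For `F(H,X) = H^α E(H,X)^{1-α}` built from a neoclassical `E`, `F` is neoclassical and
`σ_F - 1 = (σ_E - 1)/(1 + α (X E_X)/(H E_H) σ_E)`; in particular `σ_E > 1` implies
`σ_F > 1`. -/
theorem elasticity_of_substitution_composite
    (E : ℝ → ℝ → ℝ) (hE : Neoclassical E)
    (hE2 : ContDiffOn ℝ 2 (fun p : ℝ × ℝ => E p.1 p.2) {p : ℝ × ℝ | 0 < p.1 ∧ 0 < p.2})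
    (hEHX : ∀ ⦃H X : ℝ⦄, 0 < H → 0 < X → 0 < dHX E H X)
    (α : ℝ) (hα : α ∈ Set.Ioo (0 : ℝ) 1)
    (F : ℝ → ℝ → ℝ) (hF : F = fun H X => H ^ α * E H X ^ (1 - α)) :
    Neoclassical F ∧
    ∀ H X : ℝ, 0 < H → 0 < X →
      sigmaF F H X - 1 =
        (sigmaF E H X - 1) / (1 + α * (X * dX E H X) / (H * dH E H X) * sigmaF E H X) ∧
      (1 < sigmaF E H X → 1 < sigmaF F H X) := by
  subst hF
  obtain ⟨hneo, hσ⟩ := elasticity_of_substitution_composite_general hE (Set.Ioo_subset_Ico_self hα)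
  exact ⟨hneo, fun H X hH hX => hσ hH hX (hEHX hH hX)⟩
end
end
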